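/- arXiv:1504.06542 — 4 statements merged into one kernel-verified Lean document; each statement's English description precedes it below -/
import Mathlib

section
/- Let X, Y be subschemes of a scheme Z with X ∪ Y = Z (scheme-theoretically) and with scheme-theoretic intersection X ∩ Y equal to one reduced point. If f : A → Z is a morphism whose restrictions f^{-1}(X) → X and f^{-1}(Y) → Y are isomorphisms, then f is an isomorphism. -/
open CategoryTheory CategoryTheory.Limits AlgebraicGeometry

/-!
Write `Z` as the scheme-theoretic union of closed subschemes `X k`, with ideals `I k`. The preimages
of the `X k` are closed, they cover `A`, and `f` is a closed embedding on each of them, so `f` is a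
closed embedding of topological spaces and hence an affine morphism. Over an affine open with
coordinate ring `R`, let `B` be the ring of its preimage in `A`. Since `R → B` is surjective modulo
each `I k`, its cokernel `M` satisfies `M = I k • M`; iterating, `M = (∏ k, I k) • M = 0`, so `f` is
a closed immersion. Finally, the ideal of `f` is contained in every `I k`, hence vanishes.
-/

universe u

lemma sup_mul_smul_top_eq_top {R M : Type*} [CommRing R] [AddCommGroup M] [Module R M]
    {N : Submodule R M} {I J : Ideal R} (hI : N ⊔ I • ⊤ = ⊤) (hJ : N ⊔ J • ⊤ = ⊤) :
    N ⊔ (I * J) • ⊤ = ⊤ := by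
  symm
  calc ⊤ = N ⊔ I • (N ⊔ J • ⊤) := by rw [hJ, hI]
    _ = N ⊔ I • N ⊔ (I * J) • ⊤ := by rw [Submodule.smul_sup, ← Submodule.mul_smul, sup_assoc]
    _ = N ⊔ (I * J) • ⊤ := by rw [sup_eq_left.mpr (Submodule.smul_le_right : I • N ≤ N)]

lemma eq_top_of_prod_eq_bot {R M ι : Type*} [CommRing R] [AddCommGroup M] [Module R M] [Fintype ι]
    {N : Submodule R M} {I : ι → Ideal R} (hI : ∏ k, I k = ⊥) (h : ∀ k, N ⊔ I k • ⊤ = ⊤) :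
    N = ⊤ := by
  have hprod : N ⊔ (∏ k, I k) • ⊤ = ⊤ :=
    Finset.prod_induction I (fun J ↦ N ⊔ J • ⊤ = ⊤) (fun _ _ ↦ sup_mul_smul_top_eq_top)
      (by simp) fun k _ ↦ h k
  simpa [hI] using hprod

lemma surjective_of_surjective_quotientMk_comp {R B ι : Type*} [CommRing R] [CommRing B] [Fintype ι]
    (φ : R →+* B) {I : ι → Ideal R} (hI : ∏ k, I k = ⊥)
    (h : ∀ k, Function.Surjective ((Ideal.Quotient.mk ((I k).map φ)).comp φ)) :
    Function.Surjective φ := by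
  algebraize [φ]
  refine LinearMap.range_eq_top.mp
    (eq_top_of_prod_eq_bot (N := LinearMap.range (Algebra.linearMap R B)) hI fun k ↦ ?_)
  refine eq_top_iff.mpr fun b _ ↦ ?_
  obtain ⟨r, hr⟩ := h k (Ideal.Quotient.mk _ b)
  have hb : b - φ r ∈ I k • (⊤ : Submodule R B) := by
    rw [Ideal.smul_top_eq_map]
    exact Ideal.Quotient.eq.mp hr.symm
  exact Submodule.mem_sup.mpr ⟨φ r, ⟨r, rfl⟩, b - φ r, hb, add_sub_cancel _ _⟩

lemma ker_inl_of_isPushout {R B Q P : CommRingCat.{u}} {φ : R ⟶ B} {π : R ⟶ Q}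
    {inl : B ⟶ P} {inr : Q ⟶ P} (h : IsPushout φ π inl inr) (hπ : Function.Surjective π) :
    RingHom.ker inl.hom = (RingHom.ker π.hom).map φ.hom := by
  apply le_antisymm
  · let J := (RingHom.ker π.hom).map φ.hom
    have hker : RingHom.ker π.hom ≤ RingHom.ker ((Ideal.Quotient.mk J).comp φ.hom) := by
      rw [← RingHom.comap_ker, Ideal.mk_ker]
      exact Ideal.le_comap_map
    let ψ : Q →+* B ⧸ J := π.hom.liftOfSurjective hπ ⟨_, hker⟩
    have hψ : φ ≫ CommRingCat.ofHom (Ideal.Quotient.mk J) = π ≫ CommRingCat.ofHom ψ :=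
      CommRingCat.hom_ext (π.hom.liftOfRightInverse_comp _ _ ⟨_, hker⟩).symm
    calc RingHom.ker inl.hom
      _ ≤ RingHom.ker (inl ≫ h.desc _ _ hψ).hom := by
        rw [CommRingCat.hom_comp, ← RingHom.comap_ker]
        exact Ideal.ker_le_comap _
      _ = J := by rw [h.inl_desc]; exact Ideal.mk_ker
  · rw [Ideal.map_le_iff_le_comap, RingHom.comap_ker, ← CommRingCat.hom_comp, h.w,
      CommRingCat.hom_comp, ← RingHom.comap_ker]
    exact Ideal.ker_le_comap _

lemma surjective_quotientMk_comp_of_isPushout {R B Q P : CommRingCat.{u}} {φ : R ⟶ B} {π : R ⟶ Q}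
    {inl : B ⟶ P} {inr : Q ⟶ P} (h : IsPushout φ π inl inr) (hπ : Function.Surjective π)
    (hinr : Function.Surjective inr) :
    Function.Surjective
      ((Ideal.Quotient.mk ((RingHom.ker π.hom).map φ.hom)).comp φ.hom) := by
  intro y
  obtain ⟨b, rfl⟩ := Ideal.Quotient.mk_surjective y
  obtain ⟨r, hr⟩ := (hinr.comp hπ) (inl b)
  refine ⟨r, Ideal.Quotient.eq.mpr ?_⟩
  have hφr : inl (φ r) = inr (π r) := congr($(h.w) r)
  rw [← ker_inl_of_isPushout h hπ, RingHom.sub_mem_ker_iff]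
  exact hφr.trans hr

lemma isClosedEmbedding_of_comp {ι A Z : Type*} [Finite ι] [TopologicalSpace A] [TopologicalSpace Z]
    {P : ι → Type*} [∀ k, TopologicalSpace (P k)]
    {f : A → Z} (hf : Continuous f) {j : ∀ k, P k → A} (hj : ∀ k, Continuous (j k))
    (hfj : ∀ k, Topology.IsClosedEmbedding (f ∘ j k))
    (hrange : ∀ k, f ⁻¹' Set.range (f ∘ j k) ⊆ Set.range (j k))
    (hcover : ⋃ k, Set.range (j k) = Set.univ) :
    Topology.IsClosedEmbedding f := by
  refine .of_continuous_injective_isClosedMap hf (fun a b hab ↦ ?_) fun C hC ↦ ?_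
  · obtain ⟨k, p, rfl⟩ := Set.mem_iUnion.mp (hcover.ge (Set.mem_univ a))
    obtain ⟨q, rfl⟩ := hrange k ⟨p, hab⟩
    exact congr(j k $((hfj k).injective hab))
  · have hC' : f '' C = ⋃ k, (f ∘ j k) '' (j k ⁻¹' C) := by
      simp_rw [Set.image_comp, Set.image_preimage_eq_inter_range, ← Set.image_iUnion,
        ← Set.inter_iUnion, hcover, Set.inter_univ]
    rw [hC']
    exact isClosed_iUnion_of_finite fun k ↦ (hfj k).isClosedMap _ (hC.preimage (hj k))

lemma support_inf_le {Z : Scheme.{u}} (I J : Z.IdealSheafData) :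
    (I ⊓ J).support ≤ I.support ⊔ J.support :=
  Scheme.IdealSheafData.support_antitone (a := I * J) fun _ ↦ Ideal.mul_le_inf

lemma exists_mem_support_of_mem_support_iInf {ι : Type*} [Finite ι] {Z : Scheme.{u}}
    {I : ι → Z.IdealSheafData} {z : Z} (hz : z ∈ (⨅ k, I k).support) :
    ∃ k, z ∈ (I k).support := by
  have := Fintype.ofFinite ι
  by_contra! h
  rw [← Finset.inf_univ_eq_iInf] at hz
  exact Finset.inf_induction (p := fun J ↦ z ∉ J.support) (Set.notMem_empty z)
    (fun J hJ K hK hJK ↦ (support_inf_le J K hJK).elim hJ hK) (fun k _ ↦ h k) hz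

lemma iUnion_range_eq_univ_of_iInf_ker_eq_bot {ι : Type*} [Finite ι] {Z : Scheme.{u}}
    {X : ι → Scheme.{u}} {i : ∀ k, X k ⟶ Z} [∀ k, IsClosedImmersion (i k)]
    (hker : ⨅ k, (i k).ker = ⊥) : ⋃ k, Set.range (i k) = Set.univ := by
  refine Set.eq_univ_of_forall fun z ↦ Set.mem_iUnion.mpr ?_
  obtain ⟨k, hk⟩ := exists_mem_support_of_mem_support_iInf
    (show z ∈ (⨅ k, (i k).ker).support from hker ▸ Set.mem_univ z)
  refine ⟨k, ?_⟩
  rwa [← SetLike.mem_coe, Scheme.Hom.support_ker,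
    (i k).isClosedEmbedding.isClosed_range.closure_eq] at hk

lemma surjective_quotientMk_comp_app {A X Z : Scheme.{u}} (f : A ⟶ Z) [IsAffineHom f] (i : X ⟶ Z)
    [IsClosedImmersion i] [IsClosedImmersion (pullback.snd f i)] {U : Z.Opens}
    (hU : IsAffineOpen U) :
    Function.Surjective ((Ideal.Quotient.mk
      ((RingHom.ker (i.app U).hom).map (f.app U).hom)).comp (f.app U).hom) := by
  have hpreimage : pullback.snd f i ⁻¹ᵁ i ⁻¹ᵁ U =
      pullback.fst f i ⁻¹ᵁ f ⁻¹ᵁ U ⊓ pullback.snd f i ⁻¹ᵁ i ⁻¹ᵁ U := by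
    simp only [← Scheme.Hom.comp_preimage, pullback.condition, inf_idem]
  have hpushout :=
    (isIso_pushoutSection_iff (IsPullback.of_hasPullback f i) le_rfl le_rfl hpreimage).mp
      (isIso_pushoutSection_of_isAffineOpen _ _ _ _ hU (hU.preimage i) (hU.preimage f))
  simp only [← Scheme.Hom.app_eq_appLE] at hpushout
  exact surjective_quotientMk_comp_of_isPushout hpushout (i.app_surjective U hU)
    ((pullback.snd f i).app_surjective _ (hU.preimage i))

lemma ker_le_ker_of_isIso_pullback_snd {A X Z : Scheme.{u}} (f : A ⟶ Z) (i : X ⟶ Z)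
    [IsIso (pullback.snd f i)] : f.ker ≤ i.ker :=
  calc f.ker ≤ (pullback.fst f i ≫ f).ker := Scheme.Hom.le_ker_comp _ _
    _ = (pullback.snd f i ≫ i).ker := by rw [pullback.condition]
    _ = i.ker := Scheme.Hom.ker_comp_of_isIso _ _

section

variable {ι : Type*} [Finite ι] {A Z : Scheme.{u}} {X : ι → Scheme.{u}} (f : A ⟶ Z)
  {i : ∀ k, X k ⟶ Z} [∀ k, IsClosedImmersion (i k)]
  [∀ k, IsClosedImmersion (pullback.snd f (i k))]

lemma isClosedEmbedding_of_isClosedImmersion_pullback_snd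
    (hcover : ⋃ k, Set.range (i k) = Set.univ) :
    Topology.IsClosedEmbedding f := by
  have hfst (k) : f ∘ pullback.fst f (i k) = i k ∘ pullback.snd f (i k) :=
    congr(⇑$(pullback.condition (f := f) (g := i k)))
  refine isClosedEmbedding_of_comp f.continuous (fun k ↦ (pullback.fst f (i k)).continuous)
    (fun k ↦ ?_) (fun k ↦ ?_) ?_
  · rw [hfst]
    exact (i k).isClosedEmbedding.comp (pullback.snd f (i k)).isClosedEmbedding
  · rw [hfst, Scheme.Pullback.range_fst]
    exact Set.preimage_mono (Set.range_comp_subset_range _ _)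
  · simp_rw [Scheme.Pullback.range_fst, ← Set.preimage_iUnion, hcover, Set.preimage_univ]

lemma isClosedImmersion_of_isClosedImmersion_pullback_snd (hker : ⨅ k, (i k).ker = ⊥) :
    IsClosedImmersion f := by
  have hf := isClosedEmbedding_of_isClosedImmersion_pullback_snd f
    (iUnion_range_eq_univ_of_iInf_ker_eq_bot hker)
  have haff := isAffineHom_of_isInducing f hf.isInducing hf.isClosed_range
  have := Fintype.ofFinite ι
  refine isClosedImmersion_iff_isAffineHom.mpr ⟨haff, fun U hU ↦ ?_⟩
  have hinf : ⨅ k, RingHom.ker ((i k).app U).hom = ⊥ := by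
    simpa [iInf_apply] using congr(($hker).ideal ⟨U, hU⟩)
  have hprod : ∏ k, RingHom.ker ((i k).app U).hom = ⊥ := by
    rw [eq_bot_iff, ← hinf, ← Finset.inf_univ_eq_iInf]
    exact Ideal.prod_le_inf
  exact surjective_of_surjective_quotientMk_comp _ hprod
    fun k ↦ surjective_quotientMk_comp_app f (i k) hU

end

lemma ker_inf_ker_eq_bot_of_injective_app {X Y Z : Scheme.{u}} (iX : X ⟶ Z) (iY : Y ⟶ Z)
    (hsheaf : ∀ U : Z.Opens,
      Function.Injective (fun s : Γ(Z, U) => ((iX.app U) s, (iY.app U) s))) :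
    iX.ker ⊓ iY.ker = ⊥ := by
  refine eq_bot_iff.mpr fun U s hs ↦ hsheaf U ?_
  have hX : iX.app U s = 0 := iX.ideal_ker_le U hs.1
  have hY : iY.app U s = 0 := iY.ideal_ker_le U hs.2
  simp only [hX, hY, map_zero]

/-- The hypothesis `hker` says that `Z` is the scheme-theoretic union of the `X k`. -/
theorem isIso_of_restrictions_isIso_nodal_general {ι : Type*} [Finite ι] {A Z : Scheme.{u}}
    {X : ι → Scheme.{u}} (i : ∀ k, X k ⟶ Z) [∀ k, IsClosedImmersion (i k)]
    (hker : ⨅ k, (i k).ker = ⊥) (f : A ⟶ Z) (hf : ∀ k, IsIso (pullback.snd f (i k))) :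
    IsIso f := by
  have := isClosedImmersion_of_isClosedImmersion_pullback_snd f hker
  rw [IsClosedImmersion.isIso_iff_ker_eq_bot, eq_bot_iff, ← hker]
  exact le_iInf fun k ↦ ker_le_ker_of_isIso_pullback_snd f (i k)

/-- Let `Z` be a scheme which is the scheme-theoretic union of two closed subschemes
`X` and `Y` (i.e. `O_Z → i_{X*}O_X ⊕ i_{Y*}O_Y` is injective and `X ∪ Y = Z`
topologically), whose scheme-theoretic intersection `X ∩ Y` is one reduced point
(the spectrum `S` of a field `K`, with `IsPullback` expressing that `S` is the
scheme-theoretic intersection).  If `f : A ⟶ Z` is a morphism whose restrictions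
`f⁻¹(X) → X` and `f⁻¹(Y) → Y` are isomorphisms, then `f` is an isomorphism. -/
theorem isIso_of_restrictions_isIso_nodal
    (K : Type) [Field K]
    (X Y Z A : Scheme)
    (σX : Spec (CommRingCat.of K) ⟶ X) (σY : Spec (CommRingCat.of K) ⟶ Y)
    (iX : X ⟶ Z) (iY : Y ⟶ Z)
    [IsClosedImmersion iX] [IsClosedImmersion iY]
    -- the scheme-theoretic intersection `X ∩ Y` is the single reduced point `Spec K` :
    (hinter : IsPullback σX σY iX iY)
    -- scheme-theoretic union `X ∪ Y = Z` : topological surjectivity and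
    -- injectivity of `O_Z → i_{X*} O_X ⊕ i_{Y*} O_Y` :
    (hcover : ∀ z : Z, (∃ x : X, iX.base x = z) ∨ (∃ y : Y, iY.base y = z))
    (hsheaf : ∀ U : Z.Opens,
      Function.Injective (fun s : Γ(Z, U) => ((iX.app U) s, (iY.app U) s)))
    (f : A ⟶ Z)
    (hfX : IsIso (pullback.snd f iX)) (hfY : IsIso (pullback.snd f iY)) :
    IsIso f := by
  have hiXY : ∀ b, IsClosedImmersion (b.rec iY iX : Bool.rec Y X b ⟶ Z) :=
    Bool.forall_bool.mpr ⟨inferInstance, inferInstance⟩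
  refine isIso_of_restrictions_isIso_nodal_general (X := fun b ↦ Bool.rec Y X b)
    (fun b ↦ b.rec iY iX) ?_ f (Bool.forall_bool.mpr ⟨hfY, hfX⟩)
  rw [iInf_bool_eq]
  exact ker_inf_ker_eq_bot_of_injective_app iX iY hsheaf
end

section
/- Let Z be the nodal gluing of S-schemes X and Y along sections σ_X : S → X and σ_Y : S → Y. Then Z is the pushout of the diagram S → X, S → Y in the category of S-schemes: giving a morphism Z → Z' over S is the same as giving morphisms X → Z' and Y → Z' over S that agree after composing with σ_X and σ_Y. -/
open CategoryTheory CategoryTheory.Limits AlgebraicGeometry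

/-!
Morphisms out of the scheme-theoretic union `Z = X ∪ Y` are determined on `X` and `Y`: the equalizer
of two candidates is a subscheme of `Z` containing both `X` and `Y`, hence all of `Z`. Existence is
therefore local on `Z`. As `Z` carries the quotient topology from `X ⊔ Y`, every point has an affine
neighbourhood whose traces on `X` and `Y` are mapped into a common affine open of the target. For
affine schemes the claim is that `R = A ×_{A ⊗_R B} B` whenever `A` and `B` are quotients of `R` by
ideals with zero intersection.
-/

universe u v

section CommRingCat

variable {R A B P : CommRingCat.{u}} {f : R ⟶ A} {g : R ⟶ B} {inl : A ⟶ P} {inr : B ⟶ P}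

lemma ker_inr_eq_map_ker_of_isPushout (h : IsPushout f g inl inr) (hf : Function.Surjective f) :
    RingHom.ker inr.hom = (RingHom.ker f.hom).map g.hom := by
  apply le_antisymm
  · let J := (RingHom.ker f.hom).map g.hom
    have hJ : RingHom.ker f.hom ≤ RingHom.ker ((Ideal.Quotient.mk J).comp g.hom) := by
      rw [← RingHom.comap_ker, Ideal.mk_ker]
      exact Ideal.le_comap_map
    let α : A ⟶ CommRingCat.of (B ⧸ J) := CommRingCat.ofHom <|
      RingHom.liftOfSurjective f.hom hf ⟨(Ideal.Quotient.mk J).comp g.hom, hJ⟩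
    have hα : f ≫ α = g ≫ CommRingCat.ofHom (Ideal.Quotient.mk J) := by
      ext r
      exact f.hom.liftOfRightInverse_comp_apply _ (Function.rightInverse_surjInv hf) ⟨_, hJ⟩ r
    intro b (hb : inr b = 0)
    have hdesc : h.desc α _ hα (inr b) = Ideal.Quotient.mk J b := congr($(h.inr_desc α _ hα) b)
    rwa [hb, map_zero, eq_comm, Ideal.Quotient.eq_zero_iff_mem] at hdesc
  · rw [Ideal.map_le_iff_le_comap]
    intro r (hr : f r = 0)
    have hw : inl (f r) = inr (g r) := congr($(h.w) r)
    rw [Ideal.mem_comap, RingHom.mem_ker]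
    exact hw.symm.trans (by rw [hr, map_zero])

lemma isPullback_of_isPushout_of_surjective (h : IsPushout f g inl inr)
    (hf : Function.Surjective f) (hg : Function.Surjective g)
    (hfg : Function.Injective fun r : R ↦ (f r, g r)) : IsPullback f g inl inr := by
  refine IsPullback.of_map (forget CommRingCat) h.w ?_
  refine (Types.isPullback_iff _ _ _ _).mpr ⟨?_, ?_, ?_⟩
  · rw [← Functor.map_comp, ← Functor.map_comp, h.w]
  · rintro r r' ⟨hr, hr'⟩
    exact hfg (Prod.ext hr hr')
  · intro (a : A) (b : B) (hab : inl a = inr b)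
    obtain ⟨r, rfl⟩ := hf a
    have hker : g r - b ∈ RingHom.ker inr.hom := by
      have hw : inl (f r) = inr (g r) := congr($(h.w) r)
      rw [RingHom.sub_mem_ker_iff]
      exact hw.symm.trans hab
    rw [ker_inr_eq_map_ker_of_isPushout h hf, Ideal.mem_map_iff_of_surjective _ hg] at hker
    obtain ⟨i, hi, hgi⟩ := hker
    rw [RingHom.mem_ker] at hi
    refine ⟨(r - i : R), ?_, ?_⟩
    · change f.hom (r - i) = f.hom r
      rw [map_sub, hi, sub_zero]
    · change g.hom (r - i) = b
      rw [map_sub, hgi]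
      exact sub_sub_cancel _ _

end CommRingCat

lemma exists_continuousMap_desc_of_isClosedEmbedding {X Y Z W : Type*} [TopologicalSpace X]
    [TopologicalSpace Y] [TopologicalSpace Z] [TopologicalSpace W] {i : X → Z} {j : Y → Z}
    (hi : Topology.IsClosedEmbedding i) (hj : Topology.IsClosedEmbedding j)
    (hij : ∀ z, (∃ x, i x = z) ∨ ∃ y, j y = z) (f : C(X, W)) (g : C(Y, W))
    (hfg : ∀ x y, i x = j y → f x = g y) :
    ∃ h : C(Z, W), (∀ x, h (i x) = f x) ∧ ∀ y, h (j y) = g y := by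
  let ij : C(X ⊕ Y, Z) := ⟨Sum.elim i j, hi.continuous.sumElim hj.continuous⟩
  let fg : C(X ⊕ Y, W) := ⟨Sum.elim f g, f.continuous.sumElim g.continuous⟩
  have hquot : Topology.IsQuotientMap ij :=
    (hi.isClosedMap.sumElim hj.isClosedMap).isQuotientMap ij.continuous
      fun z ↦ Sum.exists.mpr (hij z)
  have hfac : Function.FactorsThrough fg ij := by
    rintro (x | y) (x' | y') hxy
    · exact congr_arg f (hi.injective hxy)
    · exact hfg x y' hxy
    · exact (hfg x' y hxy.symm).symm
    · exact congr_arg g (hj.injective hxy)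
  have hlift := hquot.lift_comp fg hfac
  exact ⟨hquot.lift fg hfac, fun x ↦ congr($hlift (Sum.inl x)), fun y ↦ congr($hlift (Sum.inr y))⟩

section Scheme

variable {X Z W : Scheme.{u}}

lemma comp_toSpecΓ_map_isoSpec_inv [IsAffine W] {i : X ⟶ Z} {f : X ⟶ W} {φ : Γ(W, ⊤) ⟶ Γ(Z, ⊤)}
    (h : φ ≫ i.appTop = f.appTop) : i ≫ Z.toSpecΓ ≫ Spec.map φ ≫ W.isoSpec.inv = f := by
  rw [Scheme.toSpecΓ_naturality_assoc, ← Spec.map_comp_assoc, h,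
    ← Scheme.toSpecΓ_naturality_assoc, Scheme.toSpecΓ_isoSpec_inv, Category.comp_id]

lemma morphismRestrict_app_eq_iff (i : X ⟶ Z) (V : Z.Opens) {U : V.toScheme.Opens} {s t : Γ(V, U)} :
    (i ∣_ V).app U s = (i ∣_ V).app U t ↔ i.app (V.ι ''ᵁ U) s = i.app (V.ι ''ᵁ U) t := by
  rw [morphismRestrict_app]
  exact (ConcreteCategory.bijective_of_isIso (X.presheaf.map
    (eqToHom (image_morphismRestrict_preimage i V U)).op)).injective.eq_iff

lemma morphismRestrict_homOfLE_comp {i : X ⟶ Z} {f : X ⟶ W} {U V : Z.Opens} (hUV : U ≤ V)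
    {p : V.toScheme ⟶ W} (hp : i ∣_ V ≫ p = (i ⁻¹ᵁ V).ι ≫ f) :
    i ∣_ U ≫ Z.homOfLE hUV ≫ p = (i ⁻¹ᵁ U).ι ≫ f := by
  have hres : i ∣_ U ≫ Z.homOfLE hUV = X.homOfLE (i.preimage_mono hUV) ≫ i ∣_ V := by
    simp [← cancel_mono V.ι]
  rw [reassoc_of% hres, hp, Scheme.homOfLE_ι_assoc]

lemma exists_ι_comp_eq_of_isOpenCover {J : Type v} {V : J → Z.Opens}
    (hV : TopologicalSpace.IsOpenCover V) (p : ∀ j, (V j).toScheme ⟶ W)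
    (hp : ∀ a b, Z.homOfLE (inf_le_left : V a ⊓ V b ≤ V a) ≫ p a = Z.homOfLE inf_le_right ≫ p b) :
    ∃ q : Z ⟶ W, ∀ j, (V j).ι ≫ q = p j := by
  let 𝒰 := Z.openCoverOfIsOpenCover V hV
  have hcompat (a b : J) : pullback.fst (V a).ι (V b).ι ≫ p a = pullback.snd _ _ ≫ p b := by
    rw [← cancel_epi (isPullback_opens_inf (V a) (V b)).isoPullback.hom,
      IsPullback.isoPullback_hom_fst_assoc, IsPullback.isoPullback_hom_snd_assoc, hp]
  exact ⟨𝒰.glueMorphisms p hcompat, 𝒰.ι_glueMorphisms p hcompat⟩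

end Scheme

/-- `f : X ⟶ W` and `g : Y ⟶ W` agree on the fibre product of `iX : X ⟶ Z` and `iY : Y ⟶ Z`, that
is, on the intersection `X ∩ Y` if `iX` and `iY` are closed immersions. The condition is phrased in
terms of generalized points, so that it restricts to open subschemes without choosing a model of the
fibre product. -/
def AgreeOnPullback {X Y Z W : Scheme.{u}} (iX : X ⟶ Z) (iY : Y ⟶ Z) (f : X ⟶ W) (g : Y ⟶ W) :
    Prop :=
  ∀ ⦃T : Scheme.{u}⦄ (a : T ⟶ X) (b : T ⟶ Y), a ≫ iX = b ≫ iY → a ≫ f = b ≫ g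

namespace AgreeOnPullback

variable {X Y Z W : Scheme.{u}} {iX : X ⟶ Z} {iY : Y ⟶ Z} {f : X ⟶ W} {g : Y ⟶ W}

lemma of_isPullback {S : Scheme.{u}} {σX : S ⟶ X} {σY : S ⟶ Y} (hS : IsPullback σX σY iX iY)
    (hfg : σX ≫ f = σY ≫ g) : AgreeOnPullback iX iY f g := by
  intro T a b hab
  rw [← hS.lift_fst a b hab, Category.assoc, hfg, hS.lift_snd_assoc]

lemma apply_eq (h : AgreeOnPullback iX iY f g) {x : X} {y : Y} (hxy : iX x = iY y) : f x = g y := by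
  obtain ⟨t, rfl, rfl⟩ := Scheme.Pullback.exists_preimage_pullback x y hxy
  exact congr($(h _ _ pullback.condition) t)

lemma resLE (h : AgreeOnPullback iX iY f g) {U : W.Opens} {V : Z.Opens}
    (hf : iX ⁻¹ᵁ V ≤ f ⁻¹ᵁ U) (hg : iY ⁻¹ᵁ V ≤ g ⁻¹ᵁ U) :
    AgreeOnPullback (iX ∣_ V) (iY ∣_ V) (f.resLE U _ hf) (g.resLE U _ hg) := by
  intro T a b hab
  rw [← cancel_mono U.ι, Category.assoc, Category.assoc, Scheme.Hom.resLE_comp_ι,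
    Scheme.Hom.resLE_comp_ι, ← Category.assoc, ← Category.assoc]
  apply h
  rw [Category.assoc, Category.assoc, ← morphismRestrict_ι, ← morphismRestrict_ι,
    reassoc_of% hab]

end AgreeOnPullback

/-- `Z` is the scheme-theoretic union of the images of `iX` and `iY`: these morphisms are jointly
surjective, and sections of `𝒪_Z` over any open are determined by their pullbacks. -/
structure IsSchemeTheoreticUnion {X Y Z : Scheme.{u}} (iX : X ⟶ Z) (iY : Y ⟶ Z) : Prop where
  exists_preimage : ∀ z : Z, (∃ x : X, iX x = z) ∨ (∃ y : Y, iY y = z)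
  app_injective : ∀ U : Z.Opens,
    Function.Injective (fun s : Γ(Z, U) ↦ ((iX.app U) s, (iY.app U) s))

namespace IsSchemeTheoreticUnion

variable {X Y Z W : Scheme.{u}} {iX : X ⟶ Z} {iY : Y ⟶ Z}

lemma restrict (h : IsSchemeTheoreticUnion iX iY) (V : Z.Opens) :
    IsSchemeTheoreticUnion (iX ∣_ V) (iY ∣_ V) where
  exists_preimage z := by
    obtain ⟨x, hx⟩ | ⟨y, hy⟩ := h.exists_preimage z.1
    · exact .inl ⟨⟨x, show iX x ∈ V from hx ▸ z.2⟩,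
        Subtype.ext ((morphismRestrict_base_coe iX V _).trans hx)⟩
    · exact .inr ⟨⟨y, show iY y ∈ V from hy ▸ z.2⟩,
        Subtype.ext ((morphismRestrict_base_coe iY V _).trans hy)⟩
  app_injective U s t hst := by
    obtain ⟨hX, hY⟩ := Prod.ext_iff.mp hst
    exact h.app_injective _ (Prod.ext ((morphismRestrict_app_eq_iff iX V).mp hX)
      ((morphismRestrict_app_eq_iff iY V).mp hY))

lemma isIso_of_comp_eq (h : IsSchemeTheoreticUnion iX iY) {E : Scheme.{u}} (e : E ⟶ Z)
    [IsImmersion e] {a : X ⟶ E} {b : Y ⟶ E} (ha : a ≫ e = iX) (hb : b ≫ e = iY) : IsIso e := by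
  subst ha hb
  have hsurj : Function.Surjective e := by
    intro z
    obtain ⟨x, rfl⟩ | ⟨y, rfl⟩ := h.exists_preimage z
    · exact ⟨a x, (Scheme.Hom.comp_apply a e x).symm⟩
    · exact ⟨b y, (Scheme.Hom.comp_apply b e y).symm⟩
  have : IsClosedImmersion e := .of_isPreimmersion e (hsurj.range_eq ▸ isClosed_univ)
  rw [IsClosedImmersion.isIso_iff_ker_eq_bot, eq_bot_iff]
  intro U s hs
  rw [Scheme.Hom.ker_apply, RingHom.mem_ker] at hs
  have hcomp {T : Scheme.{u}} (c : T ⟶ E) : (c ≫ e).app U s = (c ≫ e).app U 0 :=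
    congr_arg (c.app (e ⁻¹ᵁ U)) (hs.trans (map_zero _).symm)
  exact h.app_injective U (Prod.ext (hcomp a) (hcomp b))

lemma hom_ext (h : IsSchemeTheoreticUnion iX iY) {p q : Z ⟶ W}
    (hX : iX ≫ p = iX ≫ q) (hY : iY ≫ p = iY ≫ q) : p = q := by
  have := h.isIso_of_comp_eq (equalizer.ι p q) (equalizer.lift_ι iX hX) (equalizer.lift_ι iY hY)
  exact (cancel_epi (equalizer.ι p q)).mp (equalizer.condition p q)

lemma exists_desc_of_forall_exists_opens (h : IsSchemeTheoreticUnion iX iY) {f : X ⟶ W} {g : Y ⟶ W}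
    (hloc : ∀ z : Z, ∃ V : Z.Opens, z ∈ V ∧ ∃ p : V.toScheme ⟶ W,
      iX ∣_ V ≫ p = (iX ⁻¹ᵁ V).ι ≫ f ∧ iY ∣_ V ≫ p = (iY ⁻¹ᵁ V).ι ≫ g) :
    ∃ p : Z ⟶ W, iX ≫ p = f ∧ iY ≫ p = g := by
  choose V hzV p hpX hpY using hloc
  have hV : TopologicalSpace.IsOpenCover V :=
    top_le_iff.mp fun z _ ↦ TopologicalSpace.Opens.mem_iSup.mpr ⟨z, hzV z⟩
  obtain ⟨q, hq⟩ := exists_ι_comp_eq_of_isOpenCover hV p fun a b ↦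
    (h.restrict (V a ⊓ V b)).hom_ext
      ((morphismRestrict_homOfLE_comp _ (hpX a)).trans
        (morphismRestrict_homOfLE_comp _ (hpX b)).symm)
      ((morphismRestrict_homOfLE_comp _ (hpY a)).trans
        (morphismRestrict_homOfLE_comp _ (hpY b)).symm)
  have comp_q {T : Scheme.{u}} (i : T ⟶ Z) (k : T ⟶ W)
      (hk : ∀ z, i ∣_ V z ≫ p z = (i ⁻¹ᵁ V z).ι ≫ k) : i ≫ q = k :=
    Scheme.hom_ext_of_forall _ _ fun t ↦ ⟨i ⁻¹ᵁ V (i t), hzV _, by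
      rw [← morphismRestrict_ι_assoc, hq, hk]⟩
  exact ⟨q, comp_q iX f hpX, comp_q iY g hpY⟩

variable [IsClosedImmersion iX] [IsClosedImmersion iY] {f : X ⟶ W} {g : Y ⟶ W}

lemma isPullback_appTop [IsAffine Z] {S : Scheme.{u}} {σX : S ⟶ X} {σY : S ⟶ Y}
    (h : IsSchemeTheoreticUnion iX iY) (hS : IsPullback σX σY iX iY) :
    IsPullback iX.appTop iY.appTop σX.appTop σY.appTop := by
  have : IsAffine X := isAffine_of_isAffineHom iX
  have : IsAffine Y := isAffine_of_isAffineHom iY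
  exact isPullback_of_isPushout_of_surjective (isPushout_appTop_of_isPullback hS)
    (iX.app_surjective ⊤ (isAffineOpen_top Z)) (iY.app_surjective ⊤ (isAffineOpen_top Z))
    (h.app_injective ⊤)

lemma exists_desc_of_isAffine [IsAffine Z] [IsAffine W] (h : IsSchemeTheoreticUnion iX iY)
    (hfg : AgreeOnPullback iX iY f g) : ∃ p : Z ⟶ W, iX ≫ p = f ∧ iY ≫ p = g := by
  have hΓ := h.isPullback_appTop (IsPullback.of_hasPullback iX iY)
  have hw : f.appTop ≫ (pullback.fst iX iY).appTop = g.appTop ≫ (pullback.snd iX iY).appTop := by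
    rw [← Scheme.Hom.comp_appTop, ← Scheme.Hom.comp_appTop, hfg _ _ pullback.condition]
  exact ⟨Z.toSpecΓ ≫ Spec.map (hΓ.lift _ _ hw) ≫ W.isoSpec.inv,
    comp_toSpecΓ_map_isoSpec_inv (hΓ.lift_fst _ _ hw),
    comp_toSpecΓ_map_isoSpec_inv (hΓ.lift_snd _ _ hw)⟩

lemma exists_isAffineOpen_preimage_le (h : IsSchemeTheoreticUnion iX iY)
    (hfg : AgreeOnPullback iX iY f g) (z : Z) :
    ∃ U : W.Opens, IsAffineOpen U ∧ ∃ V : Z.Opens, IsAffineOpen V ∧ z ∈ V ∧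
      iX ⁻¹ᵁ V ≤ f ⁻¹ᵁ U ∧ iY ⁻¹ᵁ V ≤ g ⁻¹ᵁ U := by
  obtain ⟨k, hkX, hkY⟩ := exists_continuousMap_desc_of_isClosedEmbedding
    iX.isClosedEmbedding iY.isClosedEmbedding h.exists_preimage ⟨f, f.continuous⟩
    ⟨g, g.continuous⟩ fun _ _ hxy ↦ hfg.apply_eq hxy
  obtain ⟨U, hU, hzU, -⟩ := exists_isAffineOpen_mem_and_subset (x := k z) (U := ⊤) trivial
  obtain ⟨V, hV, hzV, hVU⟩ := exists_isAffineOpen_mem_and_subset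
    (x := z) (U := ⟨k ⁻¹' U, U.isOpen.preimage k.continuous⟩) hzU
  refine ⟨U, hU, V, hV, hzV, fun x hx ↦ ?_, fun y hy ↦ ?_⟩
  · exact show f x ∈ U from hkX x ▸ hVU hx
  · exact show g y ∈ U from hkY y ▸ hVU hy

lemma exists_desc (h : IsSchemeTheoreticUnion iX iY) (hfg : AgreeOnPullback iX iY f g) :
    ∃ p : Z ⟶ W, iX ≫ p = f ∧ iY ≫ p = g := by
  refine h.exists_desc_of_forall_exists_opens fun z ↦ ?_
  obtain ⟨U, hU, V, hV, hzV, hfU, hgU⟩ := h.exists_isAffineOpen_preimage_le hfg z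
  have : IsAffine U := hU
  have : IsAffine V := hV
  obtain ⟨p, hpX, hpY⟩ := (h.restrict V).exists_desc_of_isAffine (hfg.resLE hfU hgU)
  refine ⟨V, hzV, p ≫ U.ι, ?_, ?_⟩
  · rw [reassoc_of% hpX, Scheme.Hom.resLE_comp_ι]
  · rw [reassoc_of% hpY, Scheme.Hom.resLE_comp_ι]

end IsSchemeTheoreticUnion

/-- Universal property of the nodal gluing: let `Z` be the nodal gluing of the
`S`-schemes `X` and `Y` along sections `σX : S ⟶ X`, `σY : S ⟶ Y`; that is, `X` and `Y`
are closed subschemes of `Z` with `X ∪ Y = Z` scheme-theoretically (topological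
covering together with injectivity of `O_Z → i_{X*}O_X ⊕ i_{Y*}O_Y`) and with
scheme-theoretic intersection `X ∩ Y = σ(S)` (the `IsPullback` hypothesis).  Then `Z`
is the pushout of `X ⟵ S ⟶ Y`: giving a morphism `Z ⟶ Z'` is the same as giving
morphisms `X ⟶ Z'` and `Y ⟶ Z'` agreeing after composition with `σX` and `σY`. -/
theorem nodal_gluing_isPushout
    (S X Y Z : Scheme)
    (σX : S ⟶ X) (σY : S ⟶ Y) (iX : X ⟶ Z) (iY : Y ⟶ Z)
    [IsClosedImmersion iX] [IsClosedImmersion iY]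
    -- scheme-theoretic intersection `X ∩ Y = σ(S)` :
    (hinter : IsPullback σX σY iX iY)
    -- scheme-theoretic union `X ∪ Y = Z` :
    (hcover : ∀ z : Z, (∃ x : X, iX.base x = z) ∨ (∃ y : Y, iY.base y = z))
    (hsheaf : ∀ U : Z.Opens,
      Function.Injective (fun s : Γ(Z, U) => ((iX.app U) s, (iY.app U) s))) :
    IsPushout σX σY iX iY := by
  have hunion : IsSchemeTheoreticUnion iX iY := ⟨hcover, hsheaf⟩
  have hdesc (s : PushoutCocone σX σY) : ∃ p : Z ⟶ s.pt, iX ≫ p = s.inl ∧ iY ≫ p = s.inr :=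
    hunion.exists_desc (.of_isPullback hinter s.condition)
  choose desc hX hY using hdesc
  exact ⟨⟨hinter.w⟩, ⟨PushoutCocone.IsColimit.mk _ desc hX hY fun s m hmX hmY ↦
    hunion.hom_ext (hmX.trans (hX s).symm) (hmY.trans (hY s).symm)⟩⟩
end

section
/- Let λ_{ij} be a cylindrical growth diagram on the diagonal strip D = {(i,j) : 0 ≤ i+j ≤ r}, with main-diagonal labels ∅ and outer-diagonal labels the k×(n−k) rectangle. Then λ_{(i+r)(j−r)} = λ_{ij} for all (i,j), i.e. the rows of the diagram repeat with period r. -/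
/-- `β` is obtained from `α` by adding a single box. -/
def OneBox (α β : YoungDiagram) : Prop := α ≤ β ∧ β.cells.card = α.cells.card + 1

/-- Two cells are adjacent if they share an edge. -/
def AdjCell (c d : ℕ × ℕ) : Prop :=
  (c.1 = d.1 ∧ (c.2 + 1 = d.2 ∨ d.2 + 1 = c.2)) ∨
  (c.2 = d.2 ∧ (c.1 + 1 = d.1 ∨ d.1 + 1 = c.1))

/-- The local recurrence condition of growth diagrams for a square with corners
`γ ⊆ α, δ ⊆ β`: if the two boxes of `β/γ` are nonadjacent then `α` and `δ` are the
two distinct intermediate partitions between `γ` and `β`. -/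
def GrowthSq (γ α δ β : YoungDiagram) : Prop :=
  (∃ c ∈ β.cells, ∃ d ∈ β.cells, c ∉ γ.cells ∧ d ∉ γ.cells ∧ c ≠ d ∧ ¬ AdjCell c d) → α ≠ δ

/-- The `k × m` rectangular Young diagram. -/
def rectYD (k m : ℕ) : YoungDiagram :=
  ⟨Finset.range k ×ˢ Finset.range m, by
    intro a b hab hb
    simp only [Finset.coe_product, Set.mem_prod, Finset.mem_coe, Finset.mem_range] at hb ⊢
    exact ⟨lt_of_le_of_lt hab.1 hb.1, lt_of_le_of_lt hab.2 hb.2⟩⟩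


/-- A cylindrical growth diagram on the diagonal strip `D = {(i,j) : 0 ≤ i+j ≤ r}`:
vertices are labeled by partitions, each edge of the grid adds one box, each unit
square satisfies the growth-diagram recurrence, the main diagonal is labeled by the
empty partition and the outer diagonal by the `k × m` rectangle. -/
def IsCylGrowth (r k m : ℕ) (L : ℤ → ℤ → YoungDiagram) : Prop :=
  (∀ i j : ℤ, 0 ≤ i + j → i + j + 1 ≤ r → OneBox (L i j) (L (i + 1) j)) ∧
  (∀ i j : ℤ, 0 ≤ i + j → i + j + 1 ≤ r → OneBox (L i j) (L i (j + 1))) ∧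
  (∀ i j : ℤ, 0 ≤ i + j → i + j + 2 ≤ r →
    GrowthSq (L i j) (L i (j + 1)) (L (i + 1) j) (L (i + 1) (j + 1))) ∧
  (∀ i : ℤ, L i (-i) = ⊥) ∧
  (∀ i : ℤ, L i ((r : ℤ) - i) = rectYD k m)

/-!
The labels `L (-j) (r - i)` and `L i j` turn out to be complementary in the rectangle (one is the
other rotated by a half turn); periodicity follows by complementing twice.

Each row of the diagram is a chain of partitions, encoded by the word of row indices that receive
the successive boxes. By the local rule, passing to the next smaller row of the diagram only lowers
some letters `x + 1` to `x`. The invariant is of Greene type: the largest number of letters hit by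
`p` nonintersecting nonincreasing paths. It does not decrease when letters are lowered. If the chain
ends at the rectangle, constant paths at the last `p` heights bound it from below by the number of
boxes missing from the last `p` rows of the first partition; if the chain starts at `∅`, it is at
most the number of boxes in the first `p` rows of the last partition. This gives one half of
complementarity, and the other half is its mirror image.
-/

open Finset

section YoungDiagram

theorem rowLen_injective : Function.Injective YoungDiagram.rowLen := fun α β h => by
  refine YoungDiagram.ext (Finset.ext fun ⟨x, y⟩ => ?_)
  simp only [YoungDiagram.mem_cells, YoungDiagram.mem_iff_lt_rowLen, h]

theorem mem_rectYD {k m : ℕ} {c : ℕ × ℕ} : c ∈ rectYD k m ↔ c.1 < k ∧ c.2 < m := by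
  simp [← YoungDiagram.mem_cells, rectYD]

theorem card_rectYD (k m : ℕ) : (rectYD k m).card = k * m := by
  simp [YoungDiagram.card, rectYD]

theorem rowLen_rectYD {k x : ℕ} (m : ℕ) (hx : x < k) : (rectYD k m).rowLen x = m :=
  eq_of_forall_lt_iff fun y => by simp [← YoungDiagram.mem_iff_lt_rowLen, mem_rectYD, hx]

theorem rowLen_eq_zero_of_le_rectYD {μ : YoungDiagram} {k m x : ℕ} (hμ : μ ≤ rectYD k m)
    (hx : k ≤ x) : μ.rowLen x = 0 := by
  by_contra hpos
  have hmem : (x, 0) ∈ μ := YoungDiagram.mem_iff_lt_rowLen.2 (Nat.pos_of_ne_zero hpos)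
  exact (mem_rectYD.1 (hμ hmem)).1.not_ge hx

theorem sum_rowLen_of_le_rectYD {μ : YoungDiagram} {k m : ℕ} (hμ : μ ≤ rectYD k m) :
    ∑ x ∈ range k, μ.rowLen x = μ.card := by
  rw [YoungDiagram.card, card_eq_sum_card_fiberwise (f := Prod.fst) (t := range k)
    fun c hc => mem_coe.2 (mem_range.2 (mem_rectYD.1 (hμ hc)).1)]
  exact sum_congr rfl fun x _ => μ.rowLen_eq_card

theorem OneBox.exists_rowLen_eq {α β : YoungDiagram} (h : OneBox α β) :
    ∃ a, β.rowLen = α.rowLen + Pi.single a 1 := by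
  obtain ⟨c, hc, hβ⟩ := exists_eq_insert_iff.2 ⟨YoungDiagram.cells_subset_iff.2 h.1, h.2.symm⟩
  refine ⟨c.1, funext fun x => ?_⟩
  rw [Pi.add_apply, Pi.single_apply, YoungDiagram.rowLen_eq_card, YoungDiagram.rowLen_eq_card,
    YoungDiagram.row, YoungDiagram.row, ← hβ, filter_insert]
  by_cases hx : x = c.1
  · simp [hx, hc]
  · simp [hx, Ne.symm hx]

theorem GrowthSq.adjCell {γ δ β : YoungDiagram} (h : GrowthSq γ δ δ β) {c d : ℕ × ℕ}
    (hcβ : c ∈ β) (hcγ : c ∉ γ) (hdβ : d ∈ β) (hdγ : d ∉ γ) (hcd : c ≠ d) : AdjCell c d := by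
  by_contra hadj
  exact h ⟨c, hcβ, d, hdβ, hcγ, hdγ, hcd, hadj⟩ rfl

/-- If the boxes of `β/γ` lie in different rows `a' ≠ a` and both routes add the one in row `a'`
first, the boxes are adjacent, which puts them in one column with row `a'` on top. -/
theorem GrowthSq.row_eq_or_eq_succ {γ α δ β : YoungDiagram} (h : GrowthSq γ α δ β) {a a' c c' : ℕ}
    (ha : β.rowLen = δ.rowLen + Pi.single a 1) (ha' : α.rowLen = γ.rowLen + Pi.single a' 1)
    (hc : δ.rowLen = γ.rowLen + Pi.single c 1) (hc' : β.rowLen = α.rowLen + Pi.single c' 1) :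
    a' = a ∨ (a = a' + 1 ∧ β.rowLen a' = β.rowLen (a' + 1)) := by
  refine or_iff_not_imp_left.2 fun hne => ?_
  simp only [funext_iff, Pi.add_apply, Pi.single_apply] at ha ha' hc hc'
  obtain rfl : c = a' := by
    have := ha a'
    have := ha' a'
    have := hc a'
    have := hc' a'
    grind
  obtain rfl : α = δ := rowLen_injective (funext fun x => by rw [ha', hc])
  have hβc : β.rowLen c = γ.rowLen c + 1 := by grind
  have hβa : β.rowLen a = γ.rowLen a + 1 := by grind
  have hadj : AdjCell (c, γ.rowLen c) (a, γ.rowLen a) := by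
    refine h.adjCell ?_ ?_ ?_ ?_ fun heq => hne (congrArg Prod.fst heq)
    all_goals rw [YoungDiagram.mem_iff_lt_rowLen]; omega
  obtain ⟨hrow, -⟩ | ⟨hcol, hbelow | habove⟩ := hadj
  · exact absurd hrow hne
  · obtain rfl : c + 1 = a := hbelow
    exact ⟨rfl, by simpa only [hβc, hβa, Nat.add_right_cancel_iff] using hcol⟩
  · obtain rfl : a + 1 = c := habove
    have := α.rowLen_anti a (a + 1) a.le_succ
    grind

end YoungDiagram

section NonintersectingPaths

variable {p n t i : ℕ} {w w' : ℕ → ℕ} {ρ : ℕ → ℕ → ℕ} {F : ℕ → Fin p → ℕ} {l : Fin p}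

/-- A family of `p` nonintersecting nonincreasing lattice paths; `F s l` is the height of the
`l`-th path at time `s`, and the paths are listed from bottom to top. -/
structure IsNonintersecting (F : ℕ → Fin p → ℕ) : Prop where
  antitone : Antitone F
  strictMono : ∀ s, StrictMono (F s)

/-- The number of letters among the first `n` letters of the word `w` that are hit by a family of
paths. Its maximum over nonintersecting families is Greene's invariant: the maximal size of a union
of `p` weakly decreasing subsequences of `w`. -/
def pathWeight (n : ℕ) (w : ℕ → ℕ) (F : ℕ → Fin p → ℕ) : ℕ :=
  #{s ∈ range n | ∃ l, F s l = w s}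

theorem pathWeight_zero : pathWeight 0 w F = 0 := rfl

theorem pathWeight_succ :
    pathWeight (n + 1) w F = pathWeight n w F + if ∃ l, F n l = w n then 1 else 0 := by
  simp only [pathWeight, card_filter, sum_range_succ]

theorem pathWeight_congr (h : ∀ s < n, w s = w' s) : pathWeight n w F = pathWeight n w' F :=
  congrArg card (filter_congr fun s hs => by rw [h s (mem_range.1 hs)])

/-- The family `F` with its `l`-th path cut off at height `i` from time `t` on. -/
def lowerPath (F : ℕ → Fin p → ℕ) (t i : ℕ) (l : Fin p) (s : ℕ) (l' : Fin p) : ℕ :=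
  if t ≤ s ∧ l' = l then min (F s l) i else F s l'

theorem lowerPath_of_ne {l' : Fin p} (h : l' ≠ l) (s : ℕ) : lowerPath F t i l s l' = F s l' := by
  simp [lowerPath, h]

theorem lowerPath_of_lt {s : ℕ} (h : s < t) : lowerPath F t i l s = F s :=
  funext fun _ => if_neg fun h' => h.not_ge h'.1

theorem lowerPath_self {s : ℕ} (h : t ≤ s) : lowerPath F t i l s l = min (F s l) i := by
  simp [lowerPath, h]

theorem IsNonintersecting.apply_lt_of_index_lt (hF : IsNonintersecting F) (hl : F t l = i + 1)
    (hi : ∀ l', F t l' ≠ i) {s : ℕ} (hs : t ≤ s) {l' : Fin p} (hl' : l' < l) : F s l' < i := by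
  have : F s l' ≤ F t l' := hF.antitone hs l'
  have : F t l' < F t l := hF.strictMono t hl'
  have := hi l'
  omega

theorem IsNonintersecting.lower (hF : IsNonintersecting F) (hl : F t l = i + 1)
    (hi : ∀ l', F t l' ≠ i) : IsNonintersecting (lowerPath F t i l) where
  antitone s s' hs l' := by
    have := hF.antitone hs l'
    have := hF.antitone hs l
    grind [lowerPath]
  strictMono s l₁ l₂ hl₁₂ := by
    have := hF.strictMono s hl₁₂
    have := hF.apply_lt_of_index_lt hl hi (s := s) (l' := l₁)
    grind [lowerPath]

theorem exists_lt_iff_eq_succ_of_antitone {f : ℕ → ℕ} (hf : Antitone f) (hft : f t = i + 1)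
    (ht : t < n) : ∃ u ≤ n, ∀ s < n, t < s → (s < u ↔ f s = i + 1) := by
  have hex : ∃ u, t < u ∧ (f u ≤ i ∨ u = n) := ⟨n, ht, .inr rfl⟩
  refine ⟨Nat.find hex, Nat.find_min' hex ⟨ht, .inr rfl⟩, fun s hs hts => ?_⟩
  have hle : f s ≤ i + 1 := hft ▸ hf hts.le
  refine ⟨fun hsu => ?_, fun hsf => ?_⟩
  · have := Nat.find_min hex hsu
    omega
  · by_contra! hus
    have := hf hus
    have := (Nat.find_spec hex).2
    omega

/-- Lowering the path through the letter `i + 1` at time `t` exchanges, until it descends of its own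
accord, the letters `i + 1` it hits for the letters `i`. -/
theorem IsNonintersecting.pathWeight_le_lowerPath (hF : IsNonintersecting F) (ht : t < n)
    (hl : F t l = i + 1) (hi : ∀ l', F t l' ≠ i)
    (hw : ∀ u ≤ n, #{s ∈ Ico (t + 1) u | w s = i + 1} ≤ #{s ∈ Ico (t + 1) u | w s = i}) :
    pathWeight n w F ≤ pathWeight n (Function.update w t i) (lowerPath F t i l) := by
  obtain ⟨u, hun, hu⟩ := exists_lt_iff_eq_succ_of_antitone
    (f := fun s => F s l) (fun _ _ hs => hF.antitone hs l) hl ht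
  set hits : Finset ℕ := {s ∈ range n | ∃ l, F s l = w s} with hhits
  set lost : Finset ℕ := {s ∈ Ico (t + 1) u | w s = i + 1} with hlost
  set gained : Finset ℕ := {s ∈ Ico (t + 1) u | w s = i} with hgained
  have hdisj : Disjoint (hits \ lost) gained := by
    refine disjoint_left.2 fun s hs hs' => ?_
    simp only [hhits, hlost, hgained, mem_sdiff, mem_filter, mem_range, mem_Ico] at hs hs'
    obtain ⟨⟨⟨hsn, l', hl'⟩, -⟩, ⟨hts, hsu⟩, hws⟩ := And.intro hs hs'
    have hsl := (hu s hsn hts).1 hsu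
    have hlt : l' < l := (hF.strictMono s).lt_iff_lt.1 (by omega)
    exact (hF.apply_lt_of_index_lt hl hi (Nat.le_of_succ_le hts) hlt).ne (hl'.trans hws)
  have hsub : hits \ lost ∪ gained ⊆
      {s ∈ range n | ∃ l', lowerPath F t i l s l' = Function.update w t i s} := by
    intro s hs
    simp only [hhits, hlost, hgained, mem_union, mem_sdiff, mem_filter, mem_range, mem_Ico] at hs ⊢
    have hsn : s < n := by omega
    refine ⟨hsn, ?_⟩
    obtain hst | rfl | hts := lt_trichotomy s t
    · rw [lowerPath_of_lt hst, Function.update_of_ne hst.ne]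
      exact (hs.resolve_right (by omega)).1.2
    · exact ⟨l, by simp [lowerPath_self, hl]⟩
    · have hle : F s l ≤ i + 1 := hl ▸ hF.antitone hts.le l
      have := hu s hsn hts
      rw [Function.update_of_ne hts.ne']
      obtain ⟨⟨-, l', hl'⟩, hkept⟩ | ⟨⟨-, hsu⟩, hws⟩ := hs
      · obtain rfl | hne := eq_or_ne l' l
        · exact ⟨l', by rw [lowerPath_self hts.le]; omega⟩
        · exact ⟨l', by rw [lowerPath_of_ne hne, hl']⟩
      · exact ⟨l, by rw [lowerPath_self hts.le, hws]; omega⟩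
  calc #hits ≤ #(hits \ lost) + #gained := by
        have := le_card_sdiff lost hits
        have : #lost ≤ #gained := hw u hun
        omega
    _ = #(hits \ lost ∪ gained) := (card_union_of_disjoint hdisj).symm
    _ ≤ _ := card_le_card hsub

theorem IsNonintersecting.exists_pathWeight_le_update (hF : IsNonintersecting F) (ht : t < n)
    (hwt : w t = i + 1)
    (hw : ∀ u ≤ n, #{s ∈ Ico (t + 1) u | w s = i + 1} ≤ #{s ∈ Ico (t + 1) u | w s = i}) :
    ∃ F' : ℕ → Fin p → ℕ, IsNonintersecting F' ∧
      pathWeight n w F ≤ pathWeight n (Function.update w t i) F' := by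
  by_cases hFt : ∃ l, F t l = i + 1 ∧ ∀ l', F t l' ≠ i
  · obtain ⟨l, hl, hi⟩ := hFt
    exact ⟨_, hF.lower hl hi, hF.pathWeight_le_lowerPath ht hl hi hw⟩
  · push Not at hFt
    refine ⟨F, hF, card_le_card (monotone_filter_right _ fun s _ hs => ?_)⟩
    obtain rfl | hst := eq_or_ne s t
    · obtain ⟨l, hl⟩ := hs
      rw [Function.update_self]
      exact hFt l (hl.trans hwt)
    · rwa [Function.update_of_ne hst]

/-- The word `w` records a chain `ρ 0, …, ρ n` of sequences (the row lengths of partitions) in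
which `ρ (s + 1)` arises from `ρ s` by increasing the entry with index `w s` by one. -/
def IsRowWord (n : ℕ) (ρ : ℕ → ℕ → ℕ) (w : ℕ → ℕ) : Prop :=
  ∀ s < n, ρ (s + 1) = ρ s + Pi.single (w s) 1

theorem IsRowWord.eq_add_card (h : IsRowWord n ρ w) {s u : ℕ} (hsu : s ≤ u) (hu : u ≤ n) (x : ℕ) :
    ρ u x = ρ s x + #{v ∈ Ico s u | w v = x} := by
  induction u, hsu using Nat.le_induction with
  | base => simp
  | succ u hsu ih =>
    rw [h u hu, Pi.add_apply, ih (by omega), Pi.single_apply, card_filter, card_filter,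
      sum_Ico_succ_top hsu, add_assoc]
    simp only [eq_comm]

theorem IsRowWord.card_succ_le_card (hρ : IsRowWord n ρ w) {u : ℕ} (hu : u ≤ n)
    (hanti : Antitone (ρ u)) (htie : ρ t i = ρ t (i + 1)) :
    #{s ∈ Ico t u | w s = i + 1} ≤ #{s ∈ Ico t u | w s = i} := by
  obtain htu | hut := le_or_gt t u
  · have hlow := hρ.eq_add_card htu hu i
    have hhigh := hρ.eq_add_card htu hu (i + 1)
    have : ρ u (i + 1) ≤ ρ u i := hanti i.le_succ
    omega
  · simp [Ico_eq_empty_of_le hut.le]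

theorem val_le_of_strictMono {f : Fin p → ℕ} (hf : StrictMono f) (l : Fin p) : l ≤ f l := by
  simpa using card_le_card_of_injOn (s := Iio l) (t := range (f l)) f
    (fun l' hl' => mem_coe.2 (mem_range.2 (hf (mem_Iio.1 hl')))) hf.injective.injOn

theorem sum_single_comp {ι α : Type*} [Fintype ι] [DecidableEq α] {f : ι → α}
    (hf : Function.Injective f) (a : α) [Decidable (∃ l, f l = a)] :
    ∑ l, (Pi.single a 1 : α → ℕ) (f l) = if ∃ l, f l = a then 1 else 0 := by
  classical
  split_ifs with ha
  · obtain ⟨l, rfl⟩ := ha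
    simp [Pi.single_apply, hf.eq_iff]
  · exact sum_eq_zero fun l _ => Pi.single_eq_of_ne (fun hl => ha ⟨l, hl⟩) 1

theorem IsRowWord.pathWeight_const (hρ : IsRowWord n ρ w) {f : Fin p → ℕ}
    (hf : Function.Injective f) :
    pathWeight n w (fun _ => f) + ∑ l, ρ 0 (f l) = ∑ l, ρ n (f l) := by
  induction n with
  | zero => rw [pathWeight_zero, zero_add]
  | succ n ih =>
    have ih := ih fun s hs => hρ s (by omega)
    simp only [hρ n n.lt_succ_self, Pi.add_apply, sum_add_distrib, sum_single_comp hf,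
      pathWeight_succ]
    omega

theorem IsRowWord.pathWeight_add_le (hρ : IsRowWord n ρ w) (hanti : ∀ s, Antitone (ρ s))
    (hF : IsNonintersecting F) :
    pathWeight n w F + ∑ l, ρ 0 (F 0 l) ≤ ∑ l, ρ n (F n l) := by
  induction n with
  | zero => rw [pathWeight_zero, zero_add]
  | succ n ih =>
    have ih := ih fun s hs => hρ s (by omega)
    calc pathWeight (n + 1) w F + ∑ l, ρ 0 (F 0 l) ≤ ∑ l, ρ (n + 1) (F n l) := by
          simp only [hρ n n.lt_succ_self, Pi.add_apply, sum_add_distrib,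
            sum_single_comp (hF.strictMono n).injective, pathWeight_succ]
          omega
      _ ≤ ∑ l, ρ (n + 1) (F (n + 1) l) :=
          sum_le_sum fun l _ => hanti _ (hF.antitone n.le_succ l)

theorem IsRowWord.pathWeight_le_sum_range (hρ : IsRowWord n ρ w) (hanti : ∀ s, Antitone (ρ s))
    (hF : IsNonintersecting F) : pathWeight n w F ≤ ∑ x ∈ range p, ρ n x :=
  calc pathWeight n w F ≤ ∑ l, ρ n (F n l) := le_of_add_le_left (hρ.pathWeight_add_le hanti hF)
    _ ≤ ∑ l : Fin p, ρ n l :=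
        sum_le_sum fun l _ => hanti n (val_le_of_strictMono (hF.strictMono n) l)
    _ = ∑ x ∈ range p, ρ n x := Fin.sum_univ_eq_sum_range (ρ n) p

theorem IsRowWord.exists_pathWeight_le (hρ : IsRowWord n ρ w) (hanti : ∀ s, Antitone (ρ s))
    (hlower : ∀ s < n, w' s = w s ∨
      (w s = w' s + 1 ∧ ρ (s + 1) (w' s) = ρ (s + 1) (w' s + 1)))
    (hF : IsNonintersecting F) :
    ∃ F' : ℕ → Fin p → ℕ, IsNonintersecting F' ∧ pathWeight n w F ≤ pathWeight n w' F' := by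
  suffices H : ∀ t ≤ n, ∃ F' : ℕ → Fin p → ℕ, IsNonintersecting F' ∧
      pathWeight n w F ≤ pathWeight n (fun s => if s < t then w' s else w s) F' by
    obtain ⟨F', hF', hle⟩ := H n le_rfl
    exact ⟨F', hF', hle.trans_eq (pathWeight_congr fun s hs => if_pos hs)⟩
  intro t
  induction t with
  | zero => exact fun _ => ⟨F, hF, by simp⟩
  | succ t ih =>
    intro ht
    obtain ⟨F', hF', hle⟩ := ih (by omega)
    obtain heq | ⟨hwt, htie⟩ := hlower t ht
    · exact ⟨F', hF', hle.trans_eq (pathWeight_congr fun s _ => by grind)⟩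
    · have hballot : ∀ u ≤ n, #{s ∈ Ico (t + 1) u | (if s < t then w' s else w s) = w' t + 1} ≤
          #{s ∈ Ico (t + 1) u | (if s < t then w' s else w s) = w' t} := by
        intro u hu
        have hsuffix : ∀ s ∈ Ico (t + 1) u, (if s < t then w' s else w s) = w s := fun s hs =>
          if_neg (by have := mem_Ico.1 hs; omega)
        convert hρ.card_succ_le_card hu (hanti u) htie using 2 <;>
          exact filter_congr fun s hs => by rw [hsuffix s hs]
      obtain ⟨F'', hF'', hle'⟩ := hF'.exists_pathWeight_le_update (i := w' t) ht (by simpa) hballot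
      refine ⟨F'', hF'', hle.trans (hle'.trans_eq (pathWeight_congr fun s _ => ?_))⟩
      grind [Function.update_apply]

end NonintersectingPaths

namespace IsCylGrowth

variable {r k m : ℕ} {L : ℤ → ℤ → YoungDiagram}

theorem oneBox_left (hL : IsCylGrowth r k m L) {i j : ℤ} (h0 : 0 ≤ i + j) (hr : i + j + 1 ≤ r) :
    OneBox (L i j) (L (i + 1) j) :=
  hL.1 i j h0 hr

theorem oneBox_right (hL : IsCylGrowth r k m L) {i j : ℤ} (h0 : 0 ≤ i + j) (hr : i + j + 1 ≤ r) :
    OneBox (L i j) (L i (j + 1)) :=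
  hL.2.1 i j h0 hr

theorem growthSq (hL : IsCylGrowth r k m L) {i j : ℤ} (h0 : 0 ≤ i + j) (hr : i + j + 2 ≤ r) :
    GrowthSq (L i j) (L i (j + 1)) (L (i + 1) j) (L (i + 1) (j + 1)) :=
  hL.2.2.1 i j h0 hr

theorem apply_neg (hL : IsCylGrowth r k m L) (i : ℤ) : L i (-i) = ⊥ :=
  hL.2.2.2.1 i

theorem apply_sub (hL : IsCylGrowth r k m L) (i : ℤ) : L i (r - i) = rectYD k m :=
  hL.2.2.2.2 i

theorem swap (hL : IsCylGrowth r k m L) : IsCylGrowth r k m fun i j => L j i :=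
  ⟨fun i j _ _ => hL.oneBox_right (by omega) (by omega),
    fun i j _ _ => hL.oneBox_left (by omega) (by omega),
    fun i j _ _ hboxes => (hL.growthSq (by omega) (by omega) hboxes).symm,
    fun i => by simpa using hL.apply_neg (-i), fun i => by simpa using hL.apply_sub (r - i)⟩

theorem card_eq (hL : IsCylGrowth r k m L) {i j : ℤ} (h0 : 0 ≤ i + j) (hr : i + j ≤ r) :
    ((L i j).card : ℤ) = i + j := by
  obtain ⟨n, hn⟩ := Int.eq_ofNat_of_zero_le h0
  obtain rfl : j = n - i := by omega
  induction n with
  | zero => simp [hL.apply_neg]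
  | succ n ih =>
    have hbox := (hL.oneBox_right (i := i) (j := n - i) (by omega) (by omega)).2
    rw [show (n : ℤ) - i + 1 = (n + 1 : ℕ) - i by push_cast; ring] at hbox
    have := ih (by omega) (by omega) (by omega)
    rw [YoungDiagram.card] at *
    omega

theorem mul_eq (hL : IsCylGrowth r k m L) : k * m = r := by
  have := hL.card_eq (i := 0) (j := r) (by omega) (by omega)
  rw [← sub_zero (r : ℤ), hL.apply_sub 0, card_rectYD] at this
  omega

theorem le_rectYD (hL : IsCylGrowth r k m L) {i j : ℤ} (h0 : 0 ≤ i + j) (hr : i + j ≤ r) :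
    L i j ≤ rectYD k m := by
  obtain ⟨n, hn⟩ := Int.eq_ofNat_of_zero_le (sub_nonneg.2 hr)
  induction n generalizing j with
  | zero => rw [← hL.apply_sub i, show (r : ℤ) - i = j by omega]
  | succ n ih =>
    exact (hL.oneBox_right h0 (by omega)).1.trans (ih (by omega) (by omega) (by omega))

theorem exists_isRowWord (hL : IsCylGrowth r k m L) {i j : ℤ} {n : ℕ} (h0 : 0 ≤ i + j)
    (hr : i + j + n ≤ r) : ∃ w, IsRowWord n (fun s => (L i (j + s)).rowLen) w := by
  have hstep : ∀ s < n, ∃ a,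
      (L i (j + (s + 1 : ℕ))).rowLen = (L i (j + s)).rowLen + Pi.single a 1 := fun s hs => by
    have hbox := hL.oneBox_right (i := i) (j := j + s) (by omega) (by omega)
    simpa [add_assoc] using hbox.exists_rowLen_eq
  choose! w hw using hstep
  exact ⟨w, hw⟩

theorem letter_eq_or_eq_succ (hL : IsCylGrowth r k m L) {i j : ℤ} {n : ℕ} (h0 : 0 ≤ i + j)
    (hr : i + 1 + j + n ≤ r) {w w' : ℕ → ℕ}
    (hw : IsRowWord n (fun s => (L (i + 1) (j + s)).rowLen) w)
    (hw' : IsRowWord n (fun s => (L i (j + s)).rowLen) w') {s : ℕ} (hs : s < n) :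
    w' s = w s ∨ (w s = w' s + 1 ∧ (L (i + 1) (j + (s + 1 : ℕ))).rowLen (w' s) =
      (L (i + 1) (j + (s + 1 : ℕ))).rowLen (w' s + 1)) := by
  have hadd : j + s + 1 = j + (s + 1 : ℕ) := by push_cast; ring
  have hsq := hL.growthSq (i := i) (j := j + s) (by omega) (by omega)
  have hbox := hL.oneBox_left (i := i) (j := j + s) (by omega) (by omega)
  have hbox' := hL.oneBox_left (i := i) (j := j + s + 1) (by omega) (by omega)
  obtain ⟨c, hc⟩ := hbox.exists_rowLen_eq
  obtain ⟨c', hc'⟩ := hbox'.exists_rowLen_eq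
  rw [hadd] at hsq hc'
  exact hsq.row_eq_or_eq_succ (hw s hs) (hw' s hs) hc hc'

theorem exists_pathWeight_le (hL : IsCylGrowth r k m L) {i j : ℤ} {n p : ℕ} (H : ℕ)
    (h0 : 0 ≤ i + j) (hr : i + H + j + n ≤ r) {w : ℕ → ℕ} {F : ℕ → Fin p → ℕ}
    (hw : IsRowWord n (fun s => (L (i + H) (j + s)).rowLen) w) (hF : IsNonintersecting F) :
    ∃ (w' : ℕ → ℕ) (F' : ℕ → Fin p → ℕ), IsRowWord n (fun s => (L i (j + s)).rowLen) w' ∧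
      IsNonintersecting F' ∧ pathWeight n w F ≤ pathWeight n w' F' := by
  induction H generalizing w F with
  | zero => exact ⟨w, F, by simpa using hw, hF, le_rfl⟩
  | succ H ih =>
    rw [Nat.cast_succ, ← add_assoc] at hw
    obtain ⟨v, hv⟩ := hL.exists_isRowWord (i := i + H) (j := j) (n := n) (by omega) (by omega)
    obtain ⟨G, hG, hle⟩ := hw.exists_pathWeight_le (fun s => (L _ (j + s)).rowLen_anti)
      (fun s hs => hL.letter_eq_or_eq_succ (by omega) (by omega) hw hv hs) hF
    obtain ⟨w', F', hw', hF', hle'⟩ := ih (by omega) hv hG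
    exact ⟨w', F', hw', hF', hle.trans hle'⟩

theorem mul_le_sum_rowLen (hL : IsCylGrowth r k m L) {i j : ℤ} (h0 : 0 ≤ i + j) (hr : i + j ≤ r)
    {p : ℕ} (hp : p ≤ k) :
    p * m ≤ ∑ x ∈ range p, ((L (-j) (r - i)).rowLen x + (L i j).rowLen (k - 1 - x)) := by
  obtain ⟨H, hH⟩ := Int.eq_ofNat_of_zero_le h0
  obtain ⟨n, hn⟩ := Int.eq_ofNat_of_zero_le (sub_nonneg.2 hr)
  obtain rfl : i = -j + H := by omega
  have hend : (r : ℤ) - (-j + H) = j + n := by omega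
  let lastRows : Fin p → ℕ := fun l => k - p + l
  have hlastRows : StrictMono lastRows := fun l l' hl => Nat.add_lt_add_left hl _
  obtain ⟨w, hw⟩ := hL.exists_isRowWord (n := n) h0 (by omega)
  obtain ⟨w', F, hw', hF, hle⟩ := hL.exists_pathWeight_le H (by omega) (by omega) hw
    ⟨antitone_const, fun _ => hlastRows⟩
  have hlower : pathWeight n w (fun _ => lastRows) +
      ∑ l, (L (-j + H) j).rowLen (lastRows l) = p * m := by
    have hrect : ∀ l, (L (-j + H) (j + n)).rowLen (lastRows l) = m := fun l => by
      rw [← hend, hL.apply_sub, rowLen_rectYD m (by dsimp only [lastRows]; omega)]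
    simpa [hrect] using hw.pathWeight_const hlastRows.injective
  have hupper := hw'.pathWeight_le_sum_range (fun s => (L _ (j + s)).rowLen_anti) hF
  have hreflect : ∑ l, (L (-j + H) j).rowLen (lastRows l) =
      ∑ x ∈ range p, (L (-j + H) j).rowLen (k - 1 - x) := by
    rw [Fin.sum_univ_eq_sum_range (fun x => (L (-j + H) j).rowLen (k - p + x)),
      ← sum_range_reflect]
    refine sum_congr rfl fun x hx => congrArg _ ?_
    have := mem_range.1 hx
    omega
  rw [sum_add_distrib, hend]
  omega

theorem sum_rowLen_eq_mul (hL : IsCylGrowth r k m L) {i j : ℤ} (h0 : 0 ≤ i + j) (hr : i + j ≤ r)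
    {p : ℕ} (hp : p ≤ k) :
    ∑ x ∈ range p, ((L (-j) (r - i)).rowLen x + (L i j).rowLen (k - 1 - x)) = p * m := by
  set g : ℕ → ℕ := fun x => (L (-j) (r - i)).rowLen x + (L i j).rowLen (k - 1 - x) with hg
  have htotal : ∑ x ∈ range k, g x = k * m := by
    have h0' : 0 ≤ -j + (r - i) := by omega
    have hr' : -j + (r - i) ≤ r := by omega
    have hcard := hL.card_eq h0 hr
    have hcard' := hL.card_eq h0' hr'
    rw [hg, sum_add_distrib, sum_range_reflect, sum_rowLen_of_le_rectYD (hL.le_rectYD h0' hr'),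
      sum_rowLen_of_le_rectYD (hL.le_rectYD h0 hr), hL.mul_eq]
    omega
  have hmirror : (k - p) * m ≤ ∑ x ∈ range (k - p), g (k - 1 - x) := by
    have h := hL.swap.mul_le_sum_rowLen (i := r - i) (j := -j) (by omega) (by omega) (k.sub_le p)
    rw [neg_neg, sub_sub_cancel] at h
    refine h.trans_eq (sum_congr rfl fun x hx => ?_)
    have hx : k - 1 - (k - 1 - x) = x := by have := mem_range.1 hx; omega
    simp only [hg, hx, add_comm]
  have hsplit : ∑ x ∈ range p, g x + ∑ x ∈ range (k - p), g (k - 1 - x) = k * m := by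
    rw [← htotal, ← sum_range_add_sum_Ico g hp, sum_Ico_eq_sum_range, ← sum_range_reflect _ (k - p)]
    congr 1
    refine sum_congr rfl fun x hx => congrArg g ?_
    have := mem_range.1 hx
    omega
  have hkm : p * m + (k - p) * m = k * m := by rw [← add_mul, Nat.add_sub_cancel' hp]
  exact le_antisymm (show ∑ x ∈ range p, g x ≤ p * m by omega) (hL.mul_le_sum_rowLen h0 hr hp)

theorem rowLen_add_rowLen_rev (hL : IsCylGrowth r k m L) {i j : ℤ} (h0 : 0 ≤ i + j) (hr : i + j ≤ r)
    {x : ℕ} (hx : x < k) : (L (-j) (r - i)).rowLen x + (L i j).rowLen (k - 1 - x) = m := by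
  have hsucc := hL.sum_rowLen_eq_mul h0 hr (Nat.succ_le_of_lt hx)
  rw [sum_range_succ, hL.sum_rowLen_eq_mul h0 hr hx.le, Nat.succ_mul] at hsucc
  exact Nat.add_left_cancel hsucc

end IsCylGrowth

/-- The rows of a cylindrical growth diagram repeat with period `r`:
`λ_{(i+r)(j−r)} = λ_{ij}`. -/
theorem cylindrical_growth_periodicity
    (r k m : ℕ) (hr : r = k * m) (L : ℤ → ℤ → YoungDiagram)
    (hL : IsCylGrowth r k m L) :
    ∀ i j : ℤ, 0 ≤ i + j → i + j ≤ r → L (i + r) (j - r) = L i j := by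
  intro i j h0 h1
  refine rowLen_injective (funext fun x => ?_)
  obtain hx | hx := lt_or_ge x k
  · have hshift := hL.rowLen_add_rowLen_rev (i := i + r) (j := j - r) (by omega) (by omega)
      (show k - 1 - x < k by omega)
    have horig := hL.rowLen_add_rowLen_rev (i := r - j) (j := -i) (by omega) (by omega) hx
    rw [show -(j - r : ℤ) = r - j by ring, show (r - (i + r) : ℤ) = -i by ring,
      show k - 1 - (k - 1 - x) = x by omega] at hshift
    rw [neg_neg, sub_sub_cancel] at horig
    omega
  · rw [rowLen_eq_zero_of_le_rectYD (hL.le_rectYD h0 h1) hx,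
      rowLen_eq_zero_of_le_rectYD (hL.le_rectYD (by omega) (by omega)) hx]
end

section
/- Any two standard Young tableaux of the same straight shape λ are dual equivalent. -/
/-- A chain of partitions of length `m`, each step adding one box
(the chain encoding of a skew standard Young tableau). -/
def IsChain' (m : ℕ) (S : ℕ → YoungDiagram) : Prop := ∀ i, i < m → OneBox (S i) (S (i + 1))

/-- A growth diagram on the rectangle `[0,t] × [0,s]`. -/
def IsGrowth (t s : ℕ) (L : ℕ → ℕ → YoungDiagram) : Prop :=
  (∀ i j, i < t → j ≤ s → OneBox (L i j) (L (i + 1) j)) ∧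
  (∀ i j, i ≤ t → j < s → OneBox (L i j) (L i (j + 1))) ∧
  (∀ i j, i < t → j < s → GrowthSq (L i j) (L i (j + 1)) (L (i + 1) j) (L (i + 1) (j + 1)))

/-- `(S, T)` shuffles to `(T', S')`: there is a growth diagram on `[0,t] × [0,s]` whose
left edge is the chain `S` (length `s`), top edge is `T` (length `t`), bottom edge is `T'`
and right edge is `S'`.  This encodes the jeu de taquin shuffle of a pair of skew
standard tableaux. -/
def ShufflesTo (s t : ℕ) (S T T' S' : ℕ → YoungDiagram) : Prop :=
  ∃ L, IsGrowth t s L ∧ (∀ j, j ≤ s → L 0 j = S j) ∧ (∀ i, i ≤ t → L i s = T i) ∧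
    (∀ i, i ≤ t → L i 0 = T' i) ∧ (∀ j, j ≤ s → L t j = S' j)

/-- `R` is the rectification of the chain (skew tableau) `T`: shuffling some straight-shape
chain `A` with `T` produces the straight-shape chain `R`. -/
def Rectifies (m : ℕ) (T R : ℕ → YoungDiagram) : Prop :=
  R 0 = ⊥ ∧ ∃ s A A', A 0 = ⊥ ∧ ShufflesTo s m A T R A'

/-- Dual equivalence of two chains (skew standard tableaux) of length `m`: they have the same
shape, and shuffling any other tableau through them gives identical results. -/
def DualEquiv (m : ℕ) (S S' : ℕ → YoungDiagram) : Prop :=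
  S 0 = S' 0 ∧ S m = S' m ∧
  (∀ t T A B A' B', ShufflesTo m t S T A B → ShufflesTo m t S' T A' B' →
    ∀ i, i ≤ t → A i = A' i) ∧
  (∀ t T A B A' B', ShufflesTo t m T S A B → ShufflesTo t m T S' A' B' →
    ∀ i, i ≤ t → B i = B' i)

/-!
Record a chain of partitions by the contents of the boxes it adds. One row of a growth diagram then
slides a box through this content word, each square acting by a rule on contents alone. Because a
box cannot have the content of a box added at most two steps before it, a Knuth move
`bac ↔ bca` or `acb ↔ cab` (`a < b < c`) of the content word survives the slide as a Knuth move in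
the same positions, and the sliding box leaves the window with the same content. Hence chains
whose content words are related by Knuth moves shuffle alike.

Any two chains from `⊥` to the same shape are related in this way: if they first meet at `γ`,
coming from distinct `β` and `β'`, then the two boxes `γ / β` and `γ / β'` are outer corners of
`μ = β ⊓ β'`, and between them `μ` has an inner corner whose removal gives `ν`. Rerouting both
chains through `ν` and `μ` makes them differ by one Knuth move, and the tails are handled by
induction. Tableaux extended by a straight shape are empty, so only one side matters.
-/

/-! ### Cells and contents -/

/-- The content of a cell, column minus row. -/
def boxContent (c : ℕ × ℕ) : ℤ := c.2 - c.1

/-- The sum of the contents of all cells. -/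
def totalContent (α : YoungDiagram) : ℤ := ∑ c ∈ α.cells, boxContent c

/-- The content of the box `β / α`. Defining it for all pairs, as a difference of total contents,
makes it additive along chains. -/
def stepContent (α β : YoungDiagram) : ℤ := totalContent β - totalContent α

/-- `β` is obtained from `α` by adding the cell `c`. -/
def AddsBox (α : YoungDiagram) (c : ℕ × ℕ) (β : YoungDiagram) : Prop :=
  c ∉ α.cells ∧ insert c α.cells = β.cells

section Cells

variable {α β β' γ δ μ : YoungDiagram} {c d : ℕ × ℕ}

theorem oneBox_iff_exists_addsBox : OneBox α β ↔ ∃ c, AddsBox α c β := by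
  rw [OneBox, eq_comm]
  exact Finset.exists_eq_insert_iff.symm

theorem AddsBox.oneBox (h : AddsBox α c β) : OneBox α β := oneBox_iff_exists_addsBox.2 ⟨c, h⟩

theorem AddsBox.mem_iff (h : AddsBox α c β) : d ∈ β.cells ↔ d = c ∨ d ∈ α.cells := by
  rw [← h.2, Finset.mem_insert]

theorem AddsBox.mem (h : AddsBox α c β) : c ∈ β.cells := h.mem_iff.2 (.inl rfl)

theorem AddsBox.stepContent_eq (h : AddsBox α c β) : stepContent α β = boxContent c := by
  rw [stepContent, totalContent, totalContent, ← h.2, Finset.sum_insert h.1,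
    add_sub_cancel_right]

theorem AddsBox.mem_of_lt (h : AddsBox α c β) (hdc : d < c) : d ∈ α.cells :=
  (h.mem_iff.1 (β.isLowerSet hdc.le h.mem)).resolve_left hdc.ne

theorem AddsBox.not_lt (h : AddsBox α c β) (hd : d ∈ β.cells) : ¬ c < d := fun hcd =>
  (h.mem_iff.1 hd).elim hcd.ne' fun hα => h.1 (α.isLowerSet hcd.le hα)

theorem AddsBox.eq_of_cells (h : AddsBox α c β) (h' : AddsBox α c β') : β = β' :=
  YoungDiagram.ext (h.2.symm.trans h'.2)

theorem le_total_of_abs_boxContent_sub_le (h : |boxContent c - boxContent d| ≤ 1) :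
    c ≤ d ∨ d ≤ c := by
  simp only [Prod.le_def, boxContent, abs_le] at *
  omega

theorem OneBox.eq_of_abs_stepContent_sub_le (h : OneBox α β) (h' : OneBox α β')
    (hc : |stepContent α β - stepContent α β'| ≤ 1) : β = β' := by
  obtain ⟨c, hβ⟩ := oneBox_iff_exists_addsBox.1 h
  obtain ⟨d, hβ'⟩ := oneBox_iff_exists_addsBox.1 h'
  rw [hβ.stepContent_eq, hβ'.stepContent_eq] at hc
  obtain rfl : c = d := by
    obtain hcd | hcd := le_total_of_abs_boxContent_sub_le hc
    · exact hcd.eq_of_not_lt fun hlt => hβ.1 (hβ'.mem_of_lt hlt)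
    · exact (hcd.eq_of_not_lt fun hlt => hβ'.1 (hβ.mem_of_lt hlt)).symm
  exact hβ.eq_of_cells hβ'

theorem Icc_subset_cells_sdiff (hc : c ∉ α.cells) (hd : d ∈ β.cells) :
    Finset.Icc c d ⊆ β.cells \ α.cells := fun e he => by
  rw [Finset.mem_Icc] at he
  exact Finset.mem_sdiff.2 ⟨β.isLowerSet he.2 hd, fun h => hc (α.isLowerSet he.1 h)⟩

theorem four_le_card_Icc (hcd : c < d) (h : boxContent c = boxContent d) :
    4 ≤ (Finset.Icc c d).card := by
  obtain ⟨i, j⟩ := c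
  obtain ⟨i', j'⟩ := d
  simp only [Prod.lt_iff, boxContent] at hcd h
  rw [Finset.card_Icc_prod, Nat.card_Icc, Nat.card_Icc]
  calc 4 = 2 * 2 := rfl
    _ ≤ (i' + 1 - i) * (j' + 1 - j) := Nat.mul_le_mul (by omega) (by omega)

theorem stepContent_ne (h : OneBox α β) (hβγ : β ≤ γ) (h' : OneBox γ δ)
    (hcard : δ.cells.card ≤ α.cells.card + 3) : stepContent α β ≠ stepContent γ δ := by
  intro heq
  obtain ⟨c, hc⟩ := oneBox_iff_exists_addsBox.1 h
  obtain ⟨d, hd⟩ := oneBox_iff_exists_addsBox.1 h'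
  rw [hc.stepContent_eq, hd.stepContent_eq] at heq
  have hcγ : c ∈ γ.cells := hβγ hc.mem
  have hcd : c < d := by
    refine lt_of_le_of_ne ?_ fun h => hd.1 (h ▸ hcγ)
    refine (le_total_of_abs_boxContent_sub_le (by simp [heq])).resolve_right fun h => ?_
    exact hd.1 (γ.isLowerSet h hcγ)
  have h4 := four_le_card_Icc hcd heq
  have hsub := Finset.card_le_card (Icc_subset_cells_sdiff hc.1 hd.mem)
  have hle : α ≤ δ := h.1.trans (hβγ.trans h'.1)
  rw [Finset.card_sdiff_of_subset hle] at hsub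
  omega

theorem adjCell_iff : AdjCell c d ↔ c ⋖ d ∨ d ⋖ c := by
  simp only [AdjCell, Prod.covBy_iff, Nat.covBy_iff_add_one_eq]
  omega

theorem AddsBox.ne (hc : AddsBox α c β) (hd : AddsBox β d γ) : c ≠ d :=
  fun h => hd.1 (h ▸ hc.mem)

theorem growthSq_iff (hc : AddsBox α c β) (hd : AddsBox β d γ) :
    GrowthSq α β δ γ ↔ (¬ AdjCell c d → β ≠ δ) := by
  have hcd := hc.ne hd
  refine imp_congr_left ⟨?_, fun h => ?_⟩
  · rintro ⟨e, he, f, hf, heα, hfα, hef, hadj⟩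
    simp only [hd.mem_iff, hc.mem_iff, heα, hfα, or_false] at he hf
    obtain ⟨rfl, rfl⟩ | ⟨rfl, rfl⟩ : c = e ∧ d = f ∨ c = f ∧ d = e := by grind
    · exact hadj
    · rwa [adjCell_iff, or_comm, ← adjCell_iff]
  · exact ⟨c, hd.mem_iff.2 (.inr hc.mem), d, hd.mem, hc.1,
      fun hα => hd.1 (hc.mem_iff.2 (.inr hα)), hcd, h⟩

theorem AdjCell.boxContent_eq (h : AdjCell c d) :
    boxContent c = boxContent d + 1 ∨ boxContent d = boxContent c + 1 := by
  simp only [AdjCell, boxContent] at *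
  omega

theorem stepContent_add_stepContent (α β γ : YoungDiagram) :
    stepContent α β + stepContent β γ = stepContent α γ :=
  sub_add_sub_cancel' ..

theorem exists_addsBox_of_maximal (hc : Maximal (· ∈ β.cells) c) : ∃ α, AddsBox α c β := by
  have hlower : IsLowerSet (β.cells.erase c : Set (ℕ × ℕ)) := by
    rw [Finset.coe_erase]
    exact β.isLowerSet.erase fun b hb => hc.eq_of_ge hb
  exact ⟨⟨β.cells.erase c, hlower⟩, Finset.notMem_erase c _, Finset.insert_erase hc.prop⟩

theorem AddsBox.maximal_of_not_adjCell (hc : AddsBox α c β) (hd : AddsBox β d γ)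
    (hcd : ¬ AdjCell c d) : Maximal (· ∈ γ.cells) c := by
  rw [maximal_iff_forall_gt]
  refine ⟨hd.mem_iff.2 (.inr hc.mem), fun e hce he => ?_⟩
  obtain rfl | he := hd.mem_iff.1 he
  · exact hcd (adjCell_iff.2 (.inl ⟨hce, fun f hcf hfe => hc.not_lt (hd.mem_of_lt hfe) hcf⟩))
  · exact hc.not_lt he hce

theorem AddsBox.square (hc : AddsBox α c β) (hd : AddsBox β d γ) (hδ : AddsBox δ c γ) :
    AddsBox α d δ := by
  refine ⟨fun h => hd.1 (hc.mem_iff.2 (.inr h)), ?_⟩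
  have hins : insert c (insert d α.cells) = insert c δ.cells := by
    rw [hδ.2, ← hd.2, ← hc.2, Finset.insert_comm]
  rw [← Finset.erase_insert hδ.1, ← hins, Finset.erase_insert]
  simp [hc.1, hc.ne hd]

theorem exists_growthSq (hβ : OneBox α β) (hγ : OneBox β γ) :
    ∃ δ, OneBox α δ ∧ OneBox δ γ ∧ GrowthSq α β δ γ := by
  obtain ⟨c, hc⟩ := oneBox_iff_exists_addsBox.1 hβ
  obtain ⟨d, hd⟩ := oneBox_iff_exists_addsBox.1 hγ
  by_cases hadj : AdjCell c d
  · exact ⟨β, hβ, hγ, (growthSq_iff hc hd).2 fun h => (h hadj).elim⟩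
  obtain ⟨δ, hδ⟩ := exists_addsBox_of_maximal (hc.maximal_of_not_adjCell hd hadj)
  exact ⟨δ, (hc.square hd hδ).oneBox, hδ.oneBox,
    (growthSq_iff hc hd).2 fun _ h => hδ.1 (h ▸ hc.mem)⟩

theorem OneBox.eq_of_stepContent_eq (h : OneBox α β) (h' : OneBox α β')
    (hc : stepContent α β = stepContent α β') : β = β' :=
  h.eq_of_abs_stepContent_sub_le h' (by simp [hc])

end Cells

/-! ### Sliding a box through a content word -/

theorem mem_uIoo_iff_lt_or_gt {α : Type*} [LinearOrder α] {a b c : α} :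
    b ∈ Set.uIoo a c ↔ a < b ∧ b < c ∨ c < b ∧ b < a := by
  simp only [Set.uIoo, Set.mem_Ioo, inf_lt_iff, lt_sup_iff]
  grind

/-- The contents along the two sides of a growth square: boxes of contents `p`, then `x` are added
along one side, of contents `y`, then `q` along the other. Either `p` and `x` are neighbouring
integers and both sides agree, or the boxes commute. -/
def ContentSlide (p x y q : ℤ) : Prop :=
  ((p = x + 1 ∨ x = p + 1) ∧ y = p ∧ q = x) ∨ ((p + 2 ≤ x ∨ x + 2 ≤ p) ∧ y = x ∧ q = p)

section ContentSlide

variable {a b c p x x₀ x₁ x₂ y y₀ y₁ y₂ q q' y' r₀ r₁ r₂ s₀ s₁ s₂ : ℤ}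

theorem ContentSlide.unique (h : ContentSlide p x y q) (h' : ContentSlide p x y' q') :
    y = y' ∧ q = q' := by
  unfold ContentSlide at h h'
  omega

theorem ContentSlide.exchange (h : ContentSlide p x y q) (hpx : p = x + 1 ∨ x = p + 1) :
    y = p ∧ q = x := by
  unfold ContentSlide at h
  omega

-- The order matters only for a box lying between neighbours, where the first letter blocks it.
theorem ContentSlide.commute_or_blocked (hac : a + 2 ≤ c ∨ c + 2 ≤ a)
    (hc : ContentSlide c x x₁ r₁) (ha : ContentSlide a x₁ x₀ r₀)
    (ha' : ContentSlide a x y₁ s₁) (hc' : ContentSlide c y₁ y₀ s₀) :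
    (x₀ = y₀ ∧ s₀ = r₁ ∧ s₁ = r₀) ∨
      (a = x - 1 ∧ c = x + 1 ∨ c = x - 1 ∧ a = x + 1) ∧ (x₁ = c ∧ x₀ = c ∧ r₁ = x ∧ r₀ = a) ∧
        (y₁ = a ∧ y₀ = a ∧ s₁ = x ∧ s₀ = c) := by
  by_cases hx : a = x - 1 ∧ c = x + 1 ∨ c = x - 1 ∧ a = x + 1
  · obtain ⟨rfl, rfl⟩ := hc.exchange (by omega)
    obtain ⟨rfl, rfl⟩ := ha'.exchange (by omega)
    unfold ContentSlide at ha hc'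
    exact .inr ⟨hx, by omega, by omega⟩
  · rcases hc with ⟨_, rfl, rfl⟩ | ⟨_, rfl, rfl⟩ <;>
      rcases ha' with ⟨_, rfl, rfl⟩ | ⟨_, rfl, rfl⟩ <;>
      unfold ContentSlide at ha hc' <;> exact .inl (by omega)

theorem contentSlide_bac_bca (hb : b ∈ Set.uIoo a c)
    (h₂ : ContentSlide c x x₂ r₂) (h₁ : ContentSlide a x₂ x₁ r₁) (h₀ : ContentSlide b x₁ x₀ r₀)
    (h₂' : ContentSlide a x y₂ s₂) (h₁' : ContentSlide c y₂ y₁ s₁) (h₀' : ContentSlide b y₁ y₀ s₀)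
    (hx : b ≠ x₂) (hy : b ≠ y₂) :
    x₀ = y₀ ∧
      (s₀ = r₀ ∧ s₁ = r₂ ∧ s₂ = r₁ ∧ r₀ ∈ Set.uIoo r₁ r₂ ∨
        s₀ = r₁ ∧ s₁ = r₀ ∧ s₂ = r₂ ∧ r₂ ∈ Set.uIoo r₀ r₁) := by
  rw [mem_uIoo_iff_lt_or_gt] at hb ⊢
  obtain ⟨rfl, rfl, rfl⟩ | ⟨hac, ⟨rfl, rfl, rfl, rfl⟩, rfl, rfl, rfl, rfl⟩ :=
    h₂.commute_or_blocked (by omega) h₁ h₂' h₁'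
  · obtain ⟨rfl, rfl⟩ := h₀.unique h₀'
    refine ⟨rfl, .inl ⟨rfl, rfl, rfl, ?_⟩⟩
    clear h₁' h₀'
    rcases h₂ with ⟨_, rfl, rfl⟩ | ⟨_, rfl, rfl⟩ <;>
      rcases h₁ with ⟨_, rfl, rfl⟩ | ⟨_, rfl, rfl⟩ <;> unfold ContentSlide at * <;> omega
  · have hbs : b = s₂ := by omega
    obtain ⟨hx₀, hr₀⟩ := h₀.exchange (by omega)
    obtain ⟨hy₀, hs₀⟩ := h₀'.exchange (by omega)
    rw [mem_uIoo_iff_lt_or_gt]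
    clear h₁ h₂ h₁' h₂' h₀ h₀'
    refine ⟨?_, .inr ⟨?_, ?_, ?_, ?_⟩⟩ <;> omega

theorem contentSlide_acb_cab (hb : b ∈ Set.uIoo a c)
    (h₂ : ContentSlide b x x₂ r₂) (h₁ : ContentSlide c x₂ x₁ r₁) (h₀ : ContentSlide a x₁ x₀ r₀)
    (h₁' : ContentSlide a x₂ y₁ s₁) (h₀' : ContentSlide c y₁ y₀ s₀) (hx : c ≠ x) (hy : a ≠ x) :
    x₀ = y₀ ∧ s₀ = r₁ ∧ s₁ = r₀ ∧ r₂ ∈ Set.uIoo r₀ r₁ := by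
  rw [mem_uIoo_iff_lt_or_gt] at hb ⊢
  obtain ⟨rfl, rfl, rfl⟩ | ⟨hac, ⟨rfl, rfl, rfl, rfl⟩, rfl, rfl, rfl, rfl⟩ :=
    h₁.commute_or_blocked (by omega) h₀ h₁' h₀'
  · refine ⟨rfl, rfl, rfl, ?_⟩
    clear h₀'
    rcases h₂ with ⟨_, rfl, rfl⟩ | ⟨_, rfl, rfl⟩ <;>
      rcases h₁ with ⟨_, rfl, rfl⟩ | ⟨_, rfl, rfl⟩ <;> unfold ContentSlide at * <;> omega
  · rcases h₂ with ⟨_, rfl, rfl⟩ | ⟨_, rfl, rfl⟩ <;> omega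

end ContentSlide

/-- The word `w` of length `m` is slid into the word `r` by a box entering from the right: before
passing `w j` the box has content `v (j + 1)`, afterwards it has content `v j`.
Rows of growth diagrams satisfy `ne` since boxes of equal content in a skew shape span a square of
at least four cells. -/
structure IsSlide (m : ℕ) (w v r : ℕ → ℤ) : Prop where
  contentSlide : ∀ j < m, ContentSlide (w j) (v (j + 1)) (v j) (r j)
  ne : ∀ j, j + 1 < m → w j ≠ v (j + 2)

/-- A Knuth move `bac ↔ bca` or `acb ↔ cab`, with `b` strictly between `a` and `c`, in positions
`k, k + 1, k + 2`. On content words of tableaux it is Haiman's elementary dual equivalence. -/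
def KnuthMove (k : ℕ) (w w' : ℕ → ℤ) : Prop :=
  w' k = w k ∧ w' (k + 1) = w (k + 2) ∧ w' (k + 2) = w (k + 1) ∧
      w k ∈ Set.uIoo (w (k + 1)) (w (k + 2)) ∨
    w' k = w (k + 1) ∧ w' (k + 1) = w k ∧ w' (k + 2) = w (k + 2) ∧
      w (k + 2) ∈ Set.uIoo (w k) (w (k + 1))

/-- Two words of length `m` that are equal or differ by a single Knuth move. -/
inductive KnuthStep (m : ℕ) (w w' : ℕ → ℤ) : Prop
  | refl (eq : ∀ j < m, w j = w' j)
  | move (k : ℕ) (le : k + 3 ≤ m) (eq : ∀ j < m, j < k ∨ k + 3 ≤ j → w j = w' j)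
      (knuth : KnuthMove k w w')

section IsSlide

variable {m k : ℕ} {w w' v v' r r' : ℕ → ℤ}

theorem IsSlide.eq_of_eq (h : IsSlide m w v r) (h' : IsSlide m w' v' r') {a b : ℕ} (hab : a ≤ b)
    (hb : b ≤ m) (hw : ∀ j, a ≤ j → j < b → w j = w' j) (hv : v b = v' b) :
    v a = v' a ∧ ∀ j, a ≤ j → j < b → r j = r' j := by
  induction hab using Nat.decreasingInduction with
  | self => exact ⟨hv, fun j _ _ => by omega⟩
  | of_succ a hab ih =>
    obtain ⟨hva, hr⟩ := ih fun j hj => hw j (by omega)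
    have ha' := h'.contentSlide a (by omega)
    rw [← hva, ← hw a le_rfl hab] at ha'
    obtain ⟨hv, hra⟩ := (h.contentSlide a (by omega)).unique ha'
    refine ⟨hv, fun j hj hjb => ?_⟩
    obtain rfl | hlt := hj.eq_or_lt
    exacts [hra, hr j hlt hjb]

theorem KnuthMove.slide (hk : KnuthMove k w w') (hkm : k + 3 ≤ m) (h : IsSlide m w v r)
    (h' : IsSlide m w' v' r') (hv : v (k + 3) = v' (k + 3)) : v k = v' k ∧ KnuthMove k r r' := by
  have h₀ := h.contentSlide k (by omega)
  have h₁ := h.contentSlide (k + 1) (by omega)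
  have h₂ := h.contentSlide (k + 2) (by omega)
  have h₀' := h'.contentSlide k (by omega)
  have h₁' := h'.contentSlide (k + 1) (by omega)
  have h₂' := h'.contentSlide (k + 2) (by omega)
  rw [← hv] at h₂'
  obtain ⟨e₀, e₁, e₂, hb⟩ | ⟨e₀, e₁, e₂, hb⟩ := hk
  · simp only [e₀, e₁, e₂] at h₀' h₁' h₂'
    exact contentSlide_bac_bca hb h₂ h₁ h₀ h₂' h₁' h₀' (h.ne k (by omega)) (e₀ ▸ h'.ne k (by omega))
  · simp only [e₀, e₁, e₂] at h₀' h₁' h₂'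
    obtain ⟨hv₂, hr₂⟩ := h₂.unique h₂'
    rw [← hv₂] at h₁'
    obtain ⟨hv₀, hr₀, hr₁, hr⟩ := contentSlide_acb_cab hb h₂ h₁ h₀ h₁' h₀' (h.ne (k + 1) (by omega))
      (by rw [← e₁, hv]; exact h'.ne (k + 1) (by omega))
    exact ⟨hv₀, .inr ⟨hr₀, hr₁, hr₂.symm, hr⟩⟩

theorem KnuthStep.congr {u u' : ℕ → ℤ} (h : KnuthStep m w w') (hu : ∀ j < m, u j = w j)
    (hu' : ∀ j < m, u' j = w' j) : KnuthStep m u u' := by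
  cases h with
  | refl hw => exact .refl fun j hj => by rw [hu j hj, hu' j hj, hw j hj]
  | move k hkm hw hk =>
    refine .move k hkm (fun j hj hjk => by rw [hu j hj, hu' j hj, hw j hj hjk]) ?_
    unfold KnuthMove
    rwa [hu k (by omega), hu (k + 1) (by omega), hu (k + 2) (by omega), hu' k (by omega),
      hu' (k + 1) (by omega), hu' (k + 2) (by omega)]

theorem KnuthStep.slide (hw : KnuthStep m w w') (h : IsSlide m w v r) (h' : IsSlide m w' v' r')
    (hv : v m = v' m) : v 0 = v' 0 ∧ KnuthStep m r r' := by
  cases hw with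
  | refl hw =>
    obtain ⟨hv₀, hr⟩ := h.eq_of_eq h' m.zero_le le_rfl (fun j _ => hw j) hv
    exact ⟨hv₀, .refl fun j => hr j j.zero_le⟩
  | move k hkm hw hk =>
    obtain ⟨hv, hrr⟩ := h.eq_of_eq h' hkm le_rfl (fun j hj hjm => hw j hjm (.inr hj)) hv
    obtain ⟨hv, hk⟩ := hk.slide hkm h h' hv
    obtain ⟨hv, hrl⟩ := h.eq_of_eq h' k.zero_le (by omega)
      (fun j _ hjk => hw j (by omega) (.inl hjk)) hv
    exact ⟨hv, .move k hkm (fun j hjm hj => hj.elim (hrl j j.zero_le) (hrr j · hjm)) hk⟩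

end IsSlide

/-! ### Growth diagrams -/

/-- The word of the contents of the boxes added along a chain. -/
def contentWord (S : ℕ → YoungDiagram) (j : ℕ) : ℤ := stepContent (S j) (S (j + 1))

/-- The third clause of `DualEquiv`: every tableau extending both `S` and `S'` is shuffled to the
same result by `S` and by `S'`. -/
def ShuffleEquiv (m : ℕ) (S S' : ℕ → YoungDiagram) : Prop :=
  ∀ t T A B A' B', ShufflesTo m t S T A B → ShufflesTo m t S' T A' B' → ∀ i, i ≤ t → A i = A' i

section Growth

variable {m t i : ℕ} {L L' : ℕ → ℕ → YoungDiagram} {S S' S'' T : ℕ → YoungDiagram}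
  {α β γ δ τ : YoungDiagram}

theorem GrowthSq.contentSlide (h : GrowthSq α β δ γ) (hβ : OneBox α β) (hγ : OneBox β γ)
    (hδ : OneBox α δ) (hδγ : OneBox δ γ) :
    ContentSlide (stepContent α β) (stepContent β γ) (stepContent α δ) (stepContent δ γ) := by
  obtain ⟨c, hc⟩ := oneBox_iff_exists_addsBox.1 hβ
  obtain ⟨d, hd⟩ := oneBox_iff_exists_addsBox.1 hγ
  obtain ⟨e, he⟩ := oneBox_iff_exists_addsBox.1 hδ
  have hsum := (stepContent_add_stepContent α β γ).trans (stepContent_add_stepContent α δ γ).symm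
  by_cases hβδ : β = δ
  · subst hβδ
    have hadj : AdjCell c d := by_contra fun hadj => (growthSq_iff hc hd).1 h hadj rfl
    have hneighbour := hadj.boxContent_eq
    rw [← hc.stepContent_eq, ← hd.stepContent_eq] at hneighbour
    exact .inl ⟨hneighbour, rfl, rfl⟩
  · have hgap : ¬ |stepContent α β - stepContent α δ| ≤ 1 :=
      fun hle => hβδ (hβ.eq_of_abs_stepContent_sub_le hδ hle)
    obtain rfl : e = d := by
      obtain rfl | heβ := hd.mem_iff.1 (hδγ.1 he.mem)
      · rfl
      · obtain rfl | heα := hc.mem_iff.1 heβ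
        exacts [(hβδ (hc.eq_of_cells he)).elim, (he.1 heα).elim]
    rw [he.stepContent_eq, ← hd.stepContent_eq] at *
    rw [abs_le] at hgap
    exact .inr ⟨by omega, rfl, by omega⟩

theorem IsGrowth.isSlide (hL : IsGrowth t m L) (hi : i < t) :
    IsSlide m (contentWord (L i)) (fun j => stepContent (L i j) (L (i + 1) j))
      (contentWord (L (i + 1))) where
  contentSlide j hj := (hL.2.2 i j hi hj).contentSlide (hL.2.1 i j hi.le hj)
    (hL.1 i (j + 1) hi hj) (hL.1 i j hi hj.le) (hL.2.1 (i + 1) j hi hj)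
  ne j hj := by
    have h₀ := hL.2.1 i j hi.le (by omega)
    have h₁ := hL.2.1 i (j + 1) hi.le hj
    have h₂ := hL.1 i (j + 2) hi hj
    refine stepContent_ne h₀ h₁.1 h₂ ?_
    rw [h₂.2, h₁.2, h₀.2]

theorem IsGrowth.left_eq_of_knuthStep (hL : IsGrowth t m L) (hL' : IsGrowth t m L')
    (hLL' : L 0 0 = L' 0 0) (hw : KnuthStep m (contentWord (L 0)) (contentWord (L' 0)))
    (hm : ∀ i ≤ t, L i m = L' i m) (hi : i ≤ t) : L i 0 = L' i 0 := by
  suffices L i 0 = L' i 0 ∧ KnuthStep m (contentWord (L i)) (contentWord (L' i)) from this.1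
  induction i with
  | zero => exact ⟨hLL', hw⟩
  | succ i ih =>
    obtain ⟨h₀, hw⟩ := ih (by omega)
    have hv : stepContent (L i m) (L (i + 1) m) = stepContent (L' i m) (L' (i + 1) m) := by
      rw [hm i (by omega), hm (i + 1) hi]
    obtain ⟨hv, hw⟩ := hw.slide (hL.isSlide hi) (hL'.isSlide hi) hv
    refine ⟨(hL.1 i 0 hi m.zero_le).eq_of_stepContent_eq ?_ ?_, hw⟩
    · exact h₀ ▸ hL'.1 i 0 hi m.zero_le
    · rwa [← h₀] at hv

theorem KnuthStep.shuffleEquiv (hw : KnuthStep m (contentWord S) (contentWord S'))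
    (h₀ : S 0 = S' 0) : ShuffleEquiv m S S' := by
  rintro t T A B A' B' ⟨L, hL, hLS, hLT, hLA, -⟩ ⟨L', hL', hLS', hLT', hLA', -⟩ i hi
  rw [← hLA i hi, ← hLA' i hi]
  refine hL.left_eq_of_knuthStep hL' ?_ (hw.congr ?_ ?_) (fun i hi => ?_) hi
  · rw [hLS 0 m.zero_le, hLS' 0 m.zero_le, h₀]
  · exact fun j hj => by rw [contentWord, contentWord, hLS j hj.le, hLS (j + 1) hj]
  · exact fun j hj => by rw [contentWord, contentWord, hLS' j hj.le, hLS' (j + 1) hj]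
  · rw [hLT i hi, hLT' i hi]

theorem exists_growthRow (hS : IsChain' m S) (hτ : OneBox (S m) τ) :
    ∃ R : ℕ → YoungDiagram, R m = τ ∧ IsChain' m R ∧ (∀ j ≤ m, OneBox (S j) (R j)) ∧
      ∀ j < m, GrowthSq (S j) (S (j + 1)) (R j) (R (j + 1)) := by
  induction m generalizing S with
  | zero => exact ⟨fun _ => τ, rfl, by simp [IsChain'], by simpa, by simp⟩
  | succ m ih =>
    obtain ⟨R, hRτ, hR, hSR, hsq⟩ :=
      ih (S := fun j => S (j + 1)) (fun j hj => hS (j + 1) (by omega)) hτ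
    obtain ⟨δ, hδ, hδR, hδsq⟩ := exists_growthSq (hS 0 (by omega)) (hSR 0 m.zero_le)
    refine ⟨fun | 0 => δ | j + 1 => R j, hRτ, ?_, ?_, ?_⟩
    · rintro (_ | j) hj
      exacts [hδR, hR j (by omega)]
    · rintro (_ | j) hj
      exacts [hδ, hSR j (by omega)]
    · rintro (_ | j) hj
      exacts [hδsq, hsq j (by omega)]

theorem exists_isGrowth (hS : IsChain' m S) (hT : IsChain' t T) (h : S m = T 0) :
    ∃ L, IsGrowth t m L ∧ (∀ j, j ≤ m → L 0 j = S j) ∧ (∀ i, i ≤ t → L i m = T i) := by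
  induction t generalizing S T with
  | zero =>
    refine ⟨fun _ => S, ⟨by simp, fun _ j _ hj => hS j hj, by simp⟩, fun _ _ => rfl, fun i hi => ?_⟩
    obtain rfl : i = 0 := by omega
    exact h
  | succ t ih =>
    obtain ⟨R, hRT, hR, hSR, hsq⟩ := exists_growthRow hS (h ▸ hT 0 (by omega))
    obtain ⟨L, hL, hLR, hLT⟩ :=
      ih (T := fun i => T (i + 1)) hR (fun i hi => hT (i + 1) (by omega)) hRT
    have hSL : ∀ j ≤ m, OneBox (S j) (L 0 j) := fun j hj => (hLR j hj).symm ▸ hSR j hj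
    have hsqL : ∀ j < m, GrowthSq (S j) (S (j + 1)) (L 0 j) (L 0 (j + 1)) := fun j hj => by
      rw [hLR j hj.le, hLR (j + 1) hj]
      exact hsq j hj
    refine ⟨fun | 0 => S | i + 1 => L i, ⟨?_, ?_, ?_⟩, fun _ _ => rfl, ?_⟩
    · rintro (_ | i) j hi hj
      exacts [hSL j hj, hL.1 i j (by omega) hj]
    · rintro (_ | i) j hi hj
      exacts [hS j hj, hL.2.1 i j (by omega) hj]
    · rintro (_ | i) j hi hj
      exacts [hsqL j hj, hL.2.2 i j (by omega) hj]
    · rintro (_ | i) hi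
      exacts [h, hLT i (by omega)]

theorem ShuffleEquiv.trans (h : ShuffleEquiv m S S') (h' : ShuffleEquiv m S' S'')
    (hS' : IsChain' m S') (hm : S m = S' m) : ShuffleEquiv m S S'' := by
  rintro t T A B A'' B'' hA hA'' i hi
  obtain ⟨L, hL, hLS, hLT, -⟩ := id hA
  have hT : IsChain' t T := fun i hi => by
    rw [← hLT i hi.le, ← hLT (i + 1) hi]
    exact hL.1 i m hi le_rfl
  have hmT : S' m = T 0 := by rw [← hm, ← hLS m le_rfl, hLT 0 t.zero_le]
  obtain ⟨L', hL', hLS', hLT'⟩ := exists_isGrowth hS' hT hmT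
  have hA' : ShufflesTo m t S' T (L' · 0) (L' t) := ⟨L', hL', hLS', hLT', by simp, by simp⟩
  exact (h t _ _ _ _ _ hA hA' i hi).trans (h' t _ _ _ _ _ hA' hA'' i hi)

end Growth

/-! ### Connectedness of the tableaux of a straight shape -/

section Connectivity

variable {m n l : ℕ} {S S' U W : ℕ → YoungDiagram} {β β' γ μ ν : YoungDiagram} {c c' : ℕ × ℕ}

theorem exists_addsBox_boxContent_mem_uIoo (hc : AddsBox μ c β) (hc' : AddsBox μ c' β')
    (hne : c ≠ c') :
    ∃ ν e, AddsBox ν e μ ∧ boxContent e ∈ Set.uIoo (boxContent c) (boxContent c') := by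
  have hle : ¬ c ≤ c' := fun h => hc.1 (hc'.mem_of_lt (h.lt_of_ne hne))
  have hle' : ¬ c' ≤ c := fun h => hc'.1 (hc.mem_of_lt (h.lt_of_ne' hne))
  have hinf : c ⊓ c' ∈ μ.cells := hc.mem_of_lt (inf_lt_left.2 hle)
  obtain ⟨e, hinfe, he⟩ := μ.cells.exists_le_maximal hinf
  obtain ⟨ν, hν⟩ := exists_addsBox_of_maximal he
  have hce : ¬ c ≤ e := fun h => hc.1 (μ.isLowerSet h he.prop)
  have hce' : ¬ c' ≤ e := fun h => hc'.1 (μ.isLowerSet h he.prop)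
  refine ⟨ν, e, hν, ?_⟩
  rw [mem_uIoo_iff_lt_or_gt]
  simp only [Prod.le_def, Prod.fst_inf, Prod.snd_inf, boxContent] at *
  omega

/-- The chain that follows `U` up to index `n` and `S` afterwards. -/
def splice (n : ℕ) (U S : ℕ → YoungDiagram) (j : ℕ) : YoungDiagram := if j ≤ n then U j else S j

theorem splice_of_le {j : ℕ} (h : j ≤ n) : splice n U S j = U j := if_pos h

theorem splice_of_lt {j : ℕ} (h : n < j) : splice n U S j = S j := if_neg h.not_ge

theorem IsChain'.isChain'_splice (hU : IsChain' n U) (h : OneBox (U n) (S (n + 1)))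
    (hS : ∀ i, n < i → i < m → OneBox (S i) (S (i + 1))) : IsChain' m (splice n U S) := by
  intro i hi
  obtain hin | rfl | hin := lt_trichotomy i n
  · rw [splice_of_le hin.le, splice_of_le hin]
    exact hU i hin
  · rwa [splice_of_le le_rfl, splice_of_lt i.lt_succ_self]
  · rw [splice_of_lt hin, splice_of_lt (by omega)]
    exact hS i hin hi

theorem IsChain'.exists_snoc (hU : IsChain' n U) (h : OneBox (U n) β) :
    ∃ W, W (n + 1) = β ∧ (∀ j ≤ n, W j = U j) ∧ IsChain' (n + 1) W :=
  ⟨splice n U fun _ => β, splice_of_lt n.lt_succ_self, fun _ => splice_of_le,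
    hU.isChain'_splice h fun i hi hi' => by omega⟩

theorem IsChain'.card_cells (hS : IsChain' m S) (h₀ : S 0 = ⊥) (hn : n ≤ m) :
    (S n).cells.card = n := by
  induction n with
  | zero => simp [h₀]
  | succ n ih => rw [(hS n hn).2, ih (by omega)]

theorem exists_isChain' (ν : YoungDiagram) :
    ∃ U : ℕ → YoungDiagram, U 0 = ⊥ ∧ U ν.cells.card = ν ∧ IsChain' ν.cells.card U := by
  induction hn : ν.cells.card generalizing ν with
  | zero =>
    have hν : ν = ⊥ := YoungDiagram.ext (Finset.card_eq_zero.1 hn)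
    exact ⟨fun _ => ν, hν, rfl, by simp [IsChain']⟩
  | succ n ih =>
    obtain ⟨c, hc⟩ := Finset.card_pos.1 (by omega : 0 < ν.cells.card)
    obtain ⟨d, -, hd⟩ := ν.cells.exists_le_maximal hc
    obtain ⟨μ, hμ⟩ := exists_addsBox_of_maximal hd
    have hcard := hμ.oneBox.2
    obtain ⟨U, hU₀, hUn, hU⟩ := ih μ (by omega)
    obtain ⟨W, hWn, hWU, hW⟩ := hU.exists_snoc (hUn ▸ hμ.oneBox)
    exact ⟨W, (hWU 0 n.zero_le).trans hU₀, hWn, hW⟩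

theorem AddsBox.exists_inf (hc : AddsBox β c γ) (hc' : AddsBox β' c' γ) (hne : β ≠ β') :
    c ≠ c' ∧ ∃ μ, AddsBox μ c' β ∧ AddsBox μ c β' := by
  have hcc' : c ≠ c' := by
    rintro rfl
    refine hne (YoungDiagram.ext ?_)
    rw [← Finset.erase_insert hc.1, hc.2, ← hc'.2, Finset.erase_insert hc'.1]
  have hmax : Maximal (· ∈ β.cells) c' := maximal_iff_forall_gt.2
    ⟨(hc.mem_iff.1 hc'.mem).resolve_left hcc'.symm, fun e hlt he => hc'.not_lt (hc.oneBox.1 he) hlt⟩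
  obtain ⟨μ, hμ⟩ := exists_addsBox_of_maximal hmax
  exact ⟨hcc', μ, hμ, hμ.square hc hc'⟩

theorem knuthStep_splice (hlm : l + 3 ≤ m) (hc : AddsBox (S (l + 2)) c γ)
    (hc' : AddsBox (S' (l + 2)) c' γ) (hμ : AddsBox (W (l + 1)) c' (S (l + 2)))
    (hμ' : AddsBox (W (l + 1)) c (S' (l + 2)))
    (hW : stepContent (W l) (W (l + 1)) ∈ Set.uIoo (boxContent c) (boxContent c'))
    (hγ : S (l + 3) = γ) (h : ∀ j, l + 3 ≤ j → j ≤ m → S j = S' j) :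
    KnuthStep m (contentWord (splice (l + 1) W S)) (contentWord (splice (l + 1) W S')) := by
  have hl : ∀ {T : ℕ → YoungDiagram} {j}, j ≤ l →
      contentWord (splice (l + 1) W T) j = contentWord W j := fun hj => by
    rw [contentWord, splice_of_le (by omega), splice_of_le (by omega), contentWord]
  have hl₁ : ∀ T : ℕ → YoungDiagram,
      contentWord (splice (l + 1) W T) (l + 1) = stepContent (W (l + 1)) (T (l + 2)) := fun T => by
    rw [contentWord, splice_of_le le_rfl, splice_of_lt (by omega)]
  have hr : ∀ {T : ℕ → YoungDiagram} {j}, l + 2 ≤ j →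
      contentWord (splice (l + 1) W T) j = contentWord T j := fun hj => by
    rw [contentWord, splice_of_lt (by omega), splice_of_lt (by omega), contentWord]
  refine .move l hlm (fun j hj hjl => ?_) (.inl ⟨?_, ?_, ?_, ?_⟩)
  · obtain hjl | hjl := hjl
    · rw [hl hjl.le, hl hjl.le]
    · rw [hr (by omega), hr (by omega), contentWord, contentWord, h j hjl hj.le,
        h (j + 1) (by omega) hj]
  · rw [hl le_rfl, hl le_rfl]
  · rw [hl₁, hr le_rfl, contentWord, hγ, hμ'.stepContent_eq, hc.stepContent_eq]
  · rw [hl₁, hr le_rfl, contentWord, ← h (l + 3) le_rfl hlm, hγ, hμ.stepContent_eq,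
      hc'.stepContent_eq]
  · rw [hl le_rfl, hl₁, hr le_rfl, contentWord, contentWord, hγ, hμ.stepContent_eq,
      hc.stepContent_eq, Set.uIoo_comm]
    exact hW

theorem exists_knuthStep (hS : IsChain' m S) (hS' : IsChain' m S') (h₀ : S 0 = ⊥) (hn : n < m)
    (hne : S n ≠ S' n) (h : ∀ j, n < j → j ≤ m → S j = S' j) :
    ∃ V V', (IsChain' m V ∧ V 0 = ⊥ ∧ ∀ j, n ≤ j → V j = S j) ∧
      (IsChain' m V' ∧ V' 0 = ⊥ ∧ ∀ j, n ≤ j → V' j = S' j) ∧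
      KnuthStep m (contentWord V) (contentWord V') := by
  obtain ⟨c, hc⟩ := oneBox_iff_exists_addsBox.1 (hS n hn)
  obtain ⟨c', hc'⟩ := oneBox_iff_exists_addsBox.1 (hS' n hn)
  rw [← h (n + 1) n.lt_succ_self hn] at hc'
  obtain ⟨hcc', μ, hμ, hμ'⟩ := hc.exists_inf hc' hne
  obtain ⟨ν, e, hν, he⟩ := exists_addsBox_boxContent_mem_uIoo hμ' hμ hcc'
  obtain ⟨U, hU₀, hUν, hU⟩ := exists_isChain' ν
  obtain ⟨W, hWμ, hWU, hW⟩ := hU.exists_snoc (hUν ▸ hν.oneBox)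
  have hn₂ : n = ν.cells.card + 2 := by
    rw [← hS.card_cells h₀ hn.le, hμ.oneBox.2, hν.oneBox.2]
  generalize ν.cells.card = l at *
  subst hn₂
  have hW₀ : W 0 = ⊥ := (hWU 0 l.zero_le).trans hU₀
  have hWl : W l = ν := (hWU l le_rfl).trans hUν
  refine ⟨splice (l + 1) W S, splice (l + 1) W S', ⟨?_, hW₀, fun j => splice_of_lt⟩,
    ⟨?_, hW₀, fun j => splice_of_lt⟩, knuthStep_splice hn hc hc' ?_ ?_ ?_ rfl h⟩
  · exact hW.isChain'_splice (hWμ ▸ hμ.oneBox) fun i _ => hS i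
  · exact hW.isChain'_splice (hWμ ▸ hμ'.oneBox) fun i _ => hS' i
  · rwa [hWμ]
  · rwa [hWμ]
  · rwa [hWl, hWμ, hν.stepContent_eq]

theorem shuffleEquiv_of_forall_ge (hn : n ≤ m) (hS : IsChain' m S) (hS' : IsChain' m S')
    (h₀ : S 0 = ⊥) (h₀' : S' 0 = ⊥) (h : ∀ j, n ≤ j → j ≤ m → S j = S' j) :
    ShuffleEquiv m S S' := by
  induction n generalizing S S' with
  | zero =>
    refine KnuthStep.shuffleEquiv (.refl fun j hj => ?_) (h 0 le_rfl hn)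
    rw [contentWord, contentWord, h j j.zero_le hj.le, h (j + 1) (j + 1).zero_le hj]
  | succ n ih =>
    by_cases hne : S n = S' n
    · refine ih (by omega) hS hS' h₀ h₀' fun j hj hjm => ?_
      obtain rfl | hlt := hj.eq_or_lt
      exacts [hne, h j hlt hjm]
    obtain ⟨V, V', ⟨hV, hV₀, hVS⟩, ⟨hV', hV₀', hVS'⟩, hVV'⟩ := exists_knuthStep hS hS' h₀ hn hne h
    have hSV := ih (by omega) hS hV h₀ hV₀ fun j hj _ => (hVS j hj).symm
    have hV'S' := ih (by omega) hV' hS' hV₀' h₀' fun j hj _ => hVS' j hj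
    have hVV'_equiv := hVV'.shuffleEquiv (hV₀.trans hV₀'.symm)
    exact (hSV.trans hVV'_equiv hV (hVS m (by omega)).symm).trans hV'S' hV'
      ((h m hn le_rfl).trans (hVS' m (by omega)).symm)

end Connectivity

theorem not_oneBox_bot (α : YoungDiagram) : ¬ OneBox α ⊥ := fun h => by simpa using h.2

/-- Fundamental theorem of jeu de taquin / dual equivalence: any two standard Young
tableaux of the same straight shape (encoded as chains of partitions starting at the
empty partition) are dual equivalent. -/
theorem straight_shapes_dual_equivalent
    (m : ℕ) (S S' : ℕ → YoungDiagram)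
    (hS : IsChain' m S) (hS' : IsChain' m S')
    (h0 : S 0 = ⊥) (h0' : S' 0 = ⊥) (hend : S m = S' m) :
    DualEquiv m S S' := by
  have hout : ShuffleEquiv m S S' := shuffleEquiv_of_forall_ge le_rfl hS hS' h0 h0' fun j hj hjm =>
    hjm.antisymm hj ▸ hend
  refine ⟨h0.trans h0'.symm, hend, hout, ?_⟩
  rintro t T A B A' B' ⟨L, hL, -, hLS, -, hLB⟩ ⟨L', -, -, hLS', -, hLB'⟩ i hi
  obtain _ | t := t
  · obtain rfl : i = 0 := by omega
    rw [← hLB 0 hi, ← hLB' 0 hi, hLS m le_rfl, hLS' m le_rfl, hend]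
  · have hbot := hL.2.1 0 t m.zero_le t.lt_succ_self
    rw [hLS 0 m.zero_le, h0] at hbot
    exact (not_oneBox_bot _ hbot).elim
end
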